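/- Let (Δₙ)_{n≥1} be a sequence of positive meshes with Δₙ → 0 and nΔₙ → ∞ as n → ∞. For every θ > 0 there exist a constant c(θ) > 0 and n₀ ∈ ℕ such that for all n ≥ n₀, d_Kol( √θ · √Tₙ · ρ̃(n), N(0,1) ) ≤ c(θ) · ln(nΔₙ) · max( (nΔₙ)^{−1/2}, (nΔₙ²)^{1/3} ). In particular, if additionally nΔₙ² → 0 as n → ∞, then √Tₙ · ρ̃(n) converges in distribution to N(0, 1/θ). -/

import Mathlib

open MeasureTheory ProbabilityTheory Real Filter Finset
open scoped Topology ENNReal NNReal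

noncomputable section

/-- Kolmogorov distance between two Borel measures on `ℝ`. -/
def dKol (μ ν : Measure ℝ) : ℝ :=
  ⨆ z : ℝ, |(μ (Set.Iic z)).toReal - (ν (Set.Iic z)).toReal|

/-- `X 0, X 1 : ℝ → Ω → ℝ` is a pair of independent centered Gaussian processes,
started at `0`, with almost surely continuous paths on `[0,∞)` and the
Ornstein–Uhlenbeck covariance `E[Xᵢ(s)Xᵢ(t)] = (e^{−θ|t−s|} − e^{−θ(t+s)})/(2θ)`. -/
structure IsOUPair {Ω : Type} [MeasureSpace Ω] (θ : ℝ) (X : Fin 2 → ℝ → Ω → ℝ) : Prop where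
  meas : ∀ i t, Measurable (X i t)
  gaussian : ∀ (i : Fin 2) (n : ℕ) (t : Fin n → ℝ) (c : Fin n → ℝ), (∀ j, 0 ≤ t j) →
      ∃ v : NNReal, Measure.map (fun ω => ∑ j, c j * X i (t j) ω) ℙ = gaussianReal 0 v
  indep : IndepFun (fun ω t => X 0 t ω) (fun ω t => X 1 t ω) ℙ
  cont : ∀ᵐ ω ∂(ℙ : Measure Ω), ∀ i, ContinuousOn (fun t => X i t ω) (Set.Ici 0)
  init : ∀ i ω, X i 0 ω = 0
  cov : ∀ (i : Fin 2) (s t : ℝ), 0 ≤ s → 0 ≤ t →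
      ∫ ω, X i s ω * X i t ω ∂ℙ
        = (Real.exp (-θ * |t - s|) - Real.exp (-θ * (t + s))) / (2 * θ)

variable {Ω : Type} [MeasureSpace Ω]

/-- `F_T := T^{-1/2} ∫₀^T X₁(u) X₂(u) du`. -/
def ouF (X : Fin 2 → ℝ → Ω → ℝ) (T : ℝ) (ω : Ω) : ℝ :=
  (1 / Real.sqrt T) * ∫ u in (0:ℝ)..T, X 0 u ω * X 1 u ω

/-- `X̄ᵢ(T) := T^{-1} ∫₀^T Xᵢ(u) du`. -/
def ouXbar (X : Fin 2 → ℝ → Ω → ℝ) (i : Fin 2) (T : ℝ) (ω : Ω) : ℝ :=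
  (1 / T) * ∫ u in (0:ℝ)..T, X i u ω

/-- `Y_{ij}(T) := ∫₀^T Xᵢ(u)Xⱼ(u) du − T·X̄ᵢ(T)·X̄ⱼ(T)`. -/
def ouY (X : Fin 2 → ℝ → Ω → ℝ) (i j : Fin 2) (T : ℝ) (ω : Ω) : ℝ :=
  (∫ u in (0:ℝ)..T, X i u ω * X j u ω) - T * ouXbar X i T ω * ouXbar X j T ω

/-- Yule's nonsense correlation `ρ(T)`. -/
def ouRho (X : Fin 2 → ℝ → Ω → ℝ) (T : ℝ) (ω : Ω) : ℝ :=
  ouY X 0 1 T ω / Real.sqrt (ouY X 0 0 T ω * ouY X 1 1 T ω)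

/-- `A(n) := (√Tₙ/n) Σ_{k<n} X₁(kΔ)X₂(kΔ)` with `Tₙ = nΔ`. -/
def ouA (X : Fin 2 → ℝ → Ω → ℝ) (n : ℕ) (Δ : ℝ) (ω : Ω) : ℝ :=
  (Real.sqrt (n * Δ) / n) * ∑ k ∈ Finset.range n, X 0 (k * Δ) ω * X 1 (k * Δ) ω

/-- `X̃ᵢ(n) := n^{-1} Σ_{k<n} Xᵢ(kΔ)`. -/
def ouXtilde (X : Fin 2 → ℝ → Ω → ℝ) (i : Fin 2) (n : ℕ) (Δ : ℝ) (ω : Ω) : ℝ :=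
  (1 / n) * ∑ k ∈ Finset.range n, X i (k * Δ) ω

/-- `Ỹ_{ij}(n) := Δ Σ_{k<n} Xᵢ(kΔ)Xⱼ(kΔ) − Tₙ·X̃ᵢ(n)·X̃ⱼ(n)` with `Tₙ = nΔ`. -/
def ouYtilde (X : Fin 2 → ℝ → Ω → ℝ) (i j : Fin 2) (n : ℕ) (Δ : ℝ) (ω : Ω) : ℝ :=
  Δ * ∑ k ∈ Finset.range n, X i (k * Δ) ω * X j (k * Δ) ω
    - (n * Δ) * ouXtilde X i n Δ ω * ouXtilde X j n Δ ω

/-- Yule's discrete nonsense correlation `ρ̃(n)`. -/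
def ouRhoTilde (X : Fin 2 → ℝ → Ω → ℝ) (n : ℕ) (Δ : ℝ) (ω : Ω) : ℝ :=
  ouYtilde X 0 1 n Δ ω / Real.sqrt (ouYtilde X 0 0 n Δ ω * ouYtilde X 1 1 n Δ ω)




lemma g_fourth (v : ℝ≥0) : ∫ x, x ^ 4 ∂(gaussianReal 0 v) = 3 * (v:ℝ) ^ 2 := by
  have h := iteratedDeriv_mgf_zero (X := fun x : ℝ => x) (μ := gaussianReal 0 v)
    (by simp [integrableExpSet_fun_id_gaussianReal]) 4
  have hm : mgf (fun x : ℝ => x) (gaussianReal 0 v) = fun t => rexp (v * t ^ 2 / 2) := by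
    rw [mgf_fun_id_gaussianReal]; simp
  rw [hm] at h
  have e : ∀ t : ℝ, HasDerivAt (fun t : ℝ => rexp (v * t ^ 2 / 2)) (v * t * rexp (v * t ^ 2 / 2)) t := by
    intro t
    have := (((hasDerivAt_pow 2 t).const_mul (v:ℝ)).div_const 2).exp
    convert this using 1
    norm_num; ring
  have d1 : deriv (fun t : ℝ => rexp (v * t ^ 2 / 2)) = fun t => v * t * rexp (v * t ^ 2 / 2) :=
    funext fun t => (e t).deriv
  have key : ∀ (p p' : ℝ → ℝ), (∀ t, HasDerivAt p (p' t) t) →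
      deriv (fun t => p t * rexp (v * t ^ 2 / 2)) =
        fun t => (p' t + p t * (v * t)) * rexp (v * t ^ 2 / 2) := by
    intro p p' hp
    funext t
    have h1 : HasDerivAt (fun t => p t * rexp (v * t ^ 2 / 2)) _ t := (hp t).mul (e t)
    rw [h1.deriv]; ring
  have d2 := key (fun t => v * t) (fun t => v) (fun t => by simpa using (hasDerivAt_id t).const_mul (v:ℝ))
  have d3 := key (fun t => v + v * t * (v * t)) (fun t => 2 * v^2 * t) (fun t => by
    have := ((hasDerivAt_pow 2 t).const_mul ((v:ℝ)^2)).const_add (v:ℝ)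
    have e1 : (fun t : ℝ => (v:ℝ) + v * t * (v * t)) = fun x => (v:ℝ) + v ^ 2 * x ^ 2 := by
      funext t; ring
    rw [e1]
    exact this.congr_deriv (by norm_num; ring))
  have d4 := key (fun t => 2 * v^2 * t + (v + v * t * (v * t)) * (v * t)) (fun t => 3 * v^2 + 3 * v^3 * t^2) (fun t => by
    have : HasDerivAt (fun t : ℝ => (v:ℝ)^3 * t^3 + 3 * v^2 * t) _ t :=
      ((hasDerivAt_pow 3 t).const_mul ((v:ℝ)^3)).add ((hasDerivAt_id t).const_mul (3 * (v:ℝ)^2))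
    have e1 : (fun t : ℝ => 2 * (v:ℝ)^2 * t + (v + v * t * (v * t)) * (v * t)) =
        fun t : ℝ => (v:ℝ)^3 * t^3 + 3 * v^2 * t := by
      funext t; ring
    rw [e1]
    exact this.congr_deriv (by norm_num; ring))
  rw [iteratedDeriv_succ', iteratedDeriv_succ', iteratedDeriv_succ', iteratedDeriv_succ',
    iteratedDeriv_zero, d1, d2, d3, d4] at h
  simp at h
  rw [← h]

/-- standard Gaussian mass of the interval between `y` and `y D`. -/
lemma g_std (y D : ℝ) : (gaussianReal 0 1 (Set.uIcc y (y * D))).toReal ≤ 2 * |D - 1| := by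
  rcases lt_or_ge D (1/2) with hD | hD
  · have h1 : (gaussianReal 0 1 (Set.uIcc y (y * D))).toReal ≤ 1 := by
      exact measureReal_le_one
    have : |D - 1| = 1 - D := by rw [abs_sub_comm]; exact abs_of_nonneg (by linarith)
    linarith
  · rw [gaussianReal_apply_eq_integral _ (by norm_num)]
    rw [ENNReal.toReal_ofReal (integral_nonneg fun x => gaussianPDFReal_nonneg _ _ _)]
    have hb : ∀ x ∈ Set.uIcc y (y * D), ‖gaussianPDFReal 0 1 x‖ ≤ rexp (- (y^2/8)) := by
      intro x hx
      rw [Real.norm_of_nonneg (gaussianPDFReal_nonneg _ _ _), gaussianPDFReal_def]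
      have hx2 : y^2/4 ≤ x^2 := by
        rw [Set.mem_uIcc] at hx
        rcases le_total 0 y with h | h
        · have : y / 2 ≤ x := by
            rcases hx with hx | hx
            · linarith
            · nlinarith
          nlinarith
        · have : x ≤ y / 2 := by
            rcases hx with hx | hx
            · nlinarith
            · linarith
          nlinarith
      have hs : 1 ≤ √(2 * π * 1) := by
        rw [Real.one_le_sqrt]; nlinarith [Real.pi_gt_three]
      simp only [NNReal.coe_one, sub_zero]
      have : (√(2 * π * 1))⁻¹ ≤ 1 := inv_le_one_of_one_le₀ hs
      calc _ ≤ 1 * rexp (-x^2 / (2 * 1)) := by gcongr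
        _ ≤ _ := by rw [one_mul]; gcongr; linarith
    have := norm_setIntegral_le_of_norm_le_const (μ := volume) (s := Set.uIcc y (y * D)) (by simp) hb
    refine (le_trans (Real.le_norm_self _) this).trans ?_
    rw [Measure.real, Real.volume_interval, ENNReal.toReal_ofReal (abs_nonneg _)]
    rw [show y * D - y = y * (D - 1) by ring, abs_mul]
    have : rexp (-(y^2/8)) * |y| ≤ 2 := by
      rw [Real.exp_neg, inv_mul_le_iff₀ (Real.exp_pos _)]
      have := Real.add_one_le_exp (y^2/8)
      nlinarith [sq_abs y, sq_nonneg (|y| - 2)]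
    nlinarith [abs_nonneg (D-1)]

lemma g_scale (V : ℝ≥0) : gaussianReal 0 V = (gaussianReal 0 1).map (fun x => √V * x) := by
  rw [gaussianReal_map_const_mul]
  congr 1
  · simp
  · ext; simp

lemma g_interval (V : ℝ≥0) (z D : ℝ) (hz : z ≠ 0) :
    (gaussianReal 0 V (Set.uIcc z (z * D))).toReal ≤ 2 * |D - 1| := by
  rcases eq_or_ne V 0 with rfl | hV
  · rcases le_or_gt D 0 with hD | hD
    · have h1 : (gaussianReal 0 0 (Set.uIcc z (z * D))).toReal ≤ 1 := measureReal_le_one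
      have : |D - 1| = 1 - D := by rw [abs_sub_comm]; exact abs_of_nonneg (by linarith)
      linarith
    · rw [gaussianReal_zero_var, Measure.dirac_apply' _ measurableSet_uIcc]
      have : (0:ℝ) ∉ Set.uIcc z (z * D) := by
        rw [Set.mem_uIcc]
        rcases lt_or_gt_of_ne hz with h | h
        · have : z * D < 0 := mul_neg_of_neg_of_pos h hD
          push Not; constructor <;> intro <;> linarith
        · have : 0 < z * D := mul_pos h hD
          push Not; constructor <;> intro <;> linarith
      simp [this]
  · have hs : 0 < √(V:ℝ) := Real.sqrt_pos.2 (by positivity)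
    rw [g_scale, Measure.map_apply (by fun_prop) measurableSet_uIcc]
    have : (fun x => √(V:ℝ) * x) ⁻¹' (Set.uIcc z (z * D)) = Set.uIcc (z / √V) (z / √V * D) := by
      rw [Set.preimage_const_mul_uIcc hs.ne']; congr 1; ring
    rw [this]; exact g_std _ _

lemma g_cdf (V : ℝ≥0) (z : ℝ) :
    |(gaussianReal 0 V (Set.Iic z)).toReal - (gaussianReal 0 1 (Set.Iic z)).toReal| ≤ 2 * |(V:ℝ) - 1| := by
  rcases eq_or_ne V 0 with rfl | hV
  · have h1 : (gaussianReal 0 0 (Set.Iic z)).toReal ≤ 1 := measureReal_le_one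
    have h2 : (gaussianReal 0 1 (Set.Iic z)).toReal ≤ 1 := measureReal_le_one
    have h3 : 0 ≤ (gaussianReal 0 0 (Set.Iic z)).toReal := ENNReal.toReal_nonneg
    have h4 : 0 ≤ (gaussianReal 0 1 (Set.Iic z)).toReal := ENNReal.toReal_nonneg
    simp only [NNReal.coe_zero, zero_sub, abs_neg, abs_one, mul_one]
    rw [abs_le]; constructor <;> linarith
  · have hs : 0 < √(V:ℝ) := Real.sqrt_pos.2 (by positivity)
    rw [g_scale V, Measure.map_apply (by fun_prop) measurableSet_Iic]
    have : (fun x => √(V:ℝ) * x) ⁻¹' (Set.Iic z) = Set.Iic (z / √V) := by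
      ext x; simp only [Set.mem_preimage, Set.mem_Iic]; rw [le_div_iff₀ hs, mul_comm]
    rw [this]
    set y := z / √(V:ℝ) with hy
    have hz : z = y * √V := by rw [hy]; field_simp
    rw [hz]
    have h1 : |(gaussianReal 0 1 (Set.Iic y)).toReal - (gaussianReal 0 1 (Set.Iic (y * √V))).toReal|
        ≤ (gaussianReal 0 1 (Set.uIcc y (y * √V))).toReal := by
      have key : ∀ a b : ℝ, a ≤ b → (gaussianReal 0 1 (Set.Iic a)).toReal ≤ (gaussianReal 0 1 (Set.Iic b)).toReal ∧
          (gaussianReal 0 1 (Set.Iic b)).toReal ≤ (gaussianReal 0 1 (Set.Iic a)).toReal + (gaussianReal 0 1 (Set.Icc a b)).toReal := by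
        intro a b hab
        constructor
        · exact measureReal_mono (Set.Iic_subset_Iic.2 hab)
        · refine le_trans (measureReal_mono (s₂ := Set.Iic a ∪ Set.Icc a b) ?_) (measureReal_union_le _ _)
          intro x hx
          rcases le_total x a with h | h
          · exact Or.inl h
          · exact Or.inr ⟨h, hx⟩
      rcases le_total y (y * √V) with h | h
      · rw [Set.uIcc_of_le h]; have := key _ _ h; rw [abs_le]; constructor <;> linarith [this.1, this.2]
      · rw [Set.uIcc_of_ge h]; have := key _ _ h; rw [abs_le]; constructor <;> linarith [this.1, this.2]
    refine h1.trans ((g_std _ _).trans ?_)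
    have : (V:ℝ) - 1 = (√V - 1) * (√V + 1) := by
      have := Real.mul_self_sqrt (NNReal.coe_nonneg V); linarith
    rw [this, abs_mul, abs_of_pos (by linarith : 0 < √(V:ℝ) + 1)]
    nlinarith [abs_nonneg (√(V:ℝ) - 1)]


section core
variable {Ω' : Type} [MeasurableSpace Ω'] {P : Measure Ω'} [IsProbabilityMeasure P]

lemma cond_real {W Z : Ω' → (ℕ → ℝ)} (hW : Measurable W) (hZ : Measurable Z) (hI : IndepFun W Z P)
    {S : Set ((ℕ → ℝ) × (ℕ → ℝ))} (hS : MeasurableSet S) :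
    Integrable (fun ω => P.real {ω' | (W ω', Z ω) ∈ S}) P ∧
    P.real {ω | (W ω, Z ω) ∈ S} = ∫ ω, P.real {ω' | (W ω', Z ω) ∈ S} ∂P := by
  have hm := (indepFun_iff_map_prod_eq_prod_map_map hW.aemeasurable hZ.aemeasurable).1 hI
  have : IsProbabilityMeasure (P.map W) := Measure.isProbabilityMeasure_map hW.aemeasurable
  have : IsProbabilityMeasure (P.map Z) := Measure.isProbabilityMeasure_map hZ.aemeasurable
  have h1 : P {ω | (W ω, Z ω) ∈ S} = ∫⁻ ω, P {ω' | (W ω', Z ω) ∈ S} ∂P := by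
    have : P {ω | (W ω, Z ω) ∈ S} = (P.map (fun ω => (W ω, Z ω))) S := by
      rw [Measure.map_apply (hW.prodMk hZ) hS]; rfl
    rw [this, hm, Measure.prod_apply_symm hS, lintegral_map (measurable_measure_prodMk_right hS) hZ]
    refine lintegral_congr fun ω => ?_
    rw [Measure.map_apply hW (by exact (measurable_id.prodMk measurable_const) hS)]
    rfl
  have hmeas : Measurable (fun ω => P {ω' | (W ω', Z ω) ∈ S}) := by
    have := (measurable_measure_prodMk_right (μ := P.map W) hS).comp hZ
    convert this using 2 with ω
    simp only [Function.comp]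
    rw [Measure.map_apply hW (by exact (measurable_id.prodMk measurable_const) hS)]
    rfl
  constructor
  · refine Integrable.of_bound (C := 1) hmeas.ennreal_toReal.aestronglyMeasurable ?_
    refine Eventually.of_forall fun ω => ?_
    rw [Real.norm_of_nonneg measureReal_nonneg]
    exact measureReal_le_one
  · unfold Measure.real
    rw [h1, integral_toReal hmeas.aemeasurable]
    exact Eventually.of_forall fun ω => measure_lt_top _ _

/-- quadratic form of `K` on the first `n` coordinates. -/
def qf (K : ℕ → ℕ → ℝ) (n : ℕ) (c : ℕ → ℝ) : ℝ :=
  ∑ j ∈ range n, ∑ k ∈ range n, c j * c k * K j k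

def IsG (P : Measure Ω') (K : ℕ → ℕ → ℝ) (n : ℕ) (W : Ω' → ℕ → ℝ) : Prop :=
  ∀ c : ℕ → ℝ, ∃ v : ℝ≥0, (v : ℝ) = qf K n c ∧
    P.map (fun ω => ∑ j ∈ range n, c j * W ω j) = gaussianReal 0 v

variable {K : ℕ → ℕ → ℝ} {n : ℕ}

lemma lin_meas {W : Ω' → ℕ → ℝ} (hW : Measurable W) (c : ℕ → ℝ) :
    Measurable (fun ω => ∑ j ∈ range n, c j * W ω j) := by
  refine Finset.measurable_sum _ fun j _ => ?_
  exact ((measurable_pi_apply j).comp hW).const_mul _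

lemma bilin_meas {a : (ℕ → ℝ) → ℕ → ℝ} (ha : Measurable a) :
    Measurable (fun p : (ℕ → ℝ) × (ℕ → ℝ) => ∑ j ∈ range n, a p.2 j * p.1 j) := by
  refine Finset.measurable_sum _ fun j _ => ?_
  exact ((measurable_pi_apply j).comp (ha.comp measurable_snd)).mul
    ((measurable_pi_apply j).comp measurable_fst)

lemma cond_interval {W Z : Ω' → (ℕ → ℝ)} (hW : Measurable W) (hZ : Measurable Z)
    (hI : IndepFun W Z P) (hG : IsG P K n W) {a : (ℕ → ℝ) → ℕ → ℝ} (ha : Measurable a)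
    {d : (ℕ → ℝ) → ℝ} (hd : Measurable d) {z : ℝ} (hz : z ≠ 0)
    (hiZ : Integrable (fun ω => |d (Z ω) - 1|) P) :
    P.real {ω | ∑ j ∈ range n, a (Z ω) j * W ω j ∈ Set.uIcc z (z * d (Z ω))}
      ≤ 2 * ∫ ω, |d (Z ω) - 1| ∂P := by
  have hS : MeasurableSet {p : (ℕ → ℝ) × (ℕ → ℝ) |
      ∑ j ∈ range n, a p.2 j * p.1 j ∈ Set.uIcc z (z * d p.2)} := by
    have h1 := bilin_meas (n := n) ha
    have h2 : Measurable (fun p : (ℕ → ℝ) × (ℕ → ℝ) => z * d p.2) :=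
      (hd.comp measurable_snd).const_mul z
    simp only [Set.mem_uIcc]
    refine MeasurableSet.union (MeasurableSet.inter ?_ ?_) (MeasurableSet.inter ?_ ?_)
    · exact measurableSet_le measurable_const h1
    · exact measurableSet_le h1 h2
    · exact measurableSet_le h2 h1
    · exact measurableSet_le h1 measurable_const
  obtain ⟨hi, he⟩ := cond_real hW hZ hI hS
  simp only [Set.mem_ofPred_eq] at hi he
  rw [he, ← integral_const_mul]
  refine integral_mono hi (hiZ.const_mul 2) fun ω => ?_
  obtain ⟨v, hv, hm⟩ := hG (a (Z ω))
  have := g_interval v z (d (Z ω)) hz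
  rw [← hm, Measure.map_apply (lin_meas hW _) measurableSet_uIcc] at this
  exact this

lemma cond_cdf {W Z : Ω' → (ℕ → ℝ)} (hW : Measurable W) (hZ : Measurable Z)
    (hI : IndepFun W Z P) (hG : IsG P K n W) {a : (ℕ → ℝ) → ℕ → ℝ} (ha : Measurable a)
    (z : ℝ) (hiZ : Integrable (fun ω => |qf K n (a (Z ω)) - 1|) P) :
    |P.real {ω | ∑ j ∈ range n, a (Z ω) j * W ω j ≤ z} - (gaussianReal 0 1 (Set.Iic z)).toReal|
      ≤ 2 * ∫ ω, |qf K n (a (Z ω)) - 1| ∂P := by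
  have hS : MeasurableSet {p : (ℕ → ℝ) × (ℕ → ℝ) | ∑ j ∈ range n, a p.2 j * p.1 j ≤ z} :=
    measurableSet_le (bilin_meas (n := n) ha) measurable_const
  obtain ⟨hi, he⟩ := cond_real hW hZ hI hS
  simp only [Set.mem_ofPred_eq] at hi he
  have hc : ∫ _ω : Ω', (gaussianReal 0 1 (Set.Iic z)).toReal ∂P = (gaussianReal 0 1 (Set.Iic z)).toReal := by
    simp
  rw [he, ← hc, ← integral_sub hi (integrable_const _), ← integral_const_mul]
  refine (abs_integral_le_integral_abs).trans ?_
  refine integral_mono (hi.sub (integrable_const _)).abs (hiZ.const_mul 2) fun ω => ?_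
  obtain ⟨v, hv, hm⟩ := hG (a (Z ω))
  have := g_cdf v z
  rw [← hm, Measure.map_apply (lin_meas hW _) measurableSet_Iic, hv] at this
  exact this

lemma pos_prob {f : Ω' → ℝ} (hf : Integrable (fun ω => |f ω - 1|) P) :
    P.real {ω | f ω ≤ 0} ≤ ∫ ω, |f ω - 1| ∂P := by
  have h := mul_meas_ge_le_integral_of_nonneg (Eventually.of_forall fun ω => abs_nonneg (f ω - 1)) hf 1
  rw [one_mul] at h
  refine le_trans (measureReal_mono ?_) h
  intro ω hω
  simp only [Set.mem_ofPred_eq] at hω ⊢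
  rw [abs_sub_comm, abs_of_nonneg (by linarith)]; linarith

lemma ptwise {N d1 d2 z : ℝ} (h1 : 0 < d1) (h2 : 0 < d2) (hz : z ≠ 0)
    (hn1 : N ∉ Set.uIcc z (z * d1)) (hn2 : N ∉ Set.uIcc z (z * d2)) :
    N / √(d1 * d2) ≤ z ↔ N ≤ z := by
  have hs : 0 < √(d1 * d2) := Real.sqrt_pos.2 (mul_pos h1 h2)
  rw [div_le_iff₀ hs]
  set s := √(d1 * d2)
  have hss : s * s = d1 * d2 := Real.mul_self_sqrt (mul_pos h1 h2).le
  have hmin : min d1 d2 ≤ s := by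
    by_contra h
    push Not at h
    have a1 := lt_of_lt_of_le h (min_le_left _ _)
    have a2 := lt_of_lt_of_le h (min_le_right _ _)
    have := mul_lt_mul'' a1 a2 hs.le hs.le
    linarith
  have hmax : s ≤ max d1 d2 := by
    by_contra h
    push Not at h
    have a1 := lt_of_le_of_lt (le_max_left _ _) h
    have a2 := lt_of_le_of_lt (le_max_right _ _) h
    have := mul_lt_mul'' a1 a2 h1.le h2.le
    linarith
  rw [Set.mem_uIcc] at hn1 hn2
  push Not at hn1 hn2
  obtain ⟨p1, q1⟩ := hn1
  obtain ⟨p2, q2⟩ := hn2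
  rcases lt_or_gt_of_ne hz with hz | hz
  · constructor
    · intro h
      by_contra hc
      push Not at hc
      rcases min_le_iff.1 hmin with hm | hm
      · have := p1 hc.le; nlinarith
      · have := p2 hc.le; nlinarith
    · intro h
      by_contra hc
      push Not at hc
      rcases le_max_iff.1 hmax with hm | hm
      · have := q1 (by nlinarith); linarith
      · have := q2 (by nlinarith); linarith
  · constructor
    · intro h
      by_contra hc
      push Not at hc
      rcases le_max_iff.1 hmax with hm | hm
      · have := p1 hc.le; nlinarith
      · have := p2 hc.le; nlinarith
    · intro h
      by_contra hc
      push Not at hc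
      rcases min_le_iff.1 hmin with hm | hm
      · have := q1 (by nlinarith); linarith
      · have := q2 (by nlinarith); linarith

lemma symdiff_bound {A B E : Set Ω'} (h : ∀ ω, ω ∉ E → (ω ∈ A ↔ ω ∈ B)) :
    |P.real A - P.real B| ≤ P.real E := by
  have h1 : P.real A ≤ P.real B + P.real E := by
    refine le_trans (measureReal_mono (s₂ := B ∪ E) ?_) (measureReal_union_le _ _)
    intro ω hω
    by_cases hE : ω ∈ E
    · exact Or.inr hE
    · exact Or.inl ((h ω hE).1 hω)
  have h2 : P.real B ≤ P.real A + P.real E := by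
    refine le_trans (measureReal_mono (s₂ := A ∪ E) ?_) (measureReal_union_le _ _)
    intro ω hω
    by_cases hE : ω ∈ E
    · exact Or.inr hE
    · exact Or.inl ((h ω hE).2 hω)
  rw [abs_le]; constructor <;> linarith

theorem core_bound {W Z : Ω' → (ℕ → ℝ)} (hW : Measurable W) (hZ : Measurable Z)
    (hI : IndepFun W Z P) (hGW : IsG P K n W) (hGZ : IsG P K n Z)
    {a : (ℕ → ℝ) → ℕ → ℝ} (ha : Measurable a)
    (hsymm : ∀ ω, ∑ j ∈ range n, a (Z ω) j * W ω j = ∑ j ∈ range n, a (W ω) j * Z ω j)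
    {d : (ℕ → ℝ) → ℝ} (hd : Measurable d) (z : ℝ)
    (hdW : Integrable (fun ω => |d (W ω) - 1|) P)
    (hdZ : Integrable (fun ω => |d (Z ω) - 1|) P)
    (hv : Integrable (fun ω => |qf K n (a (Z ω)) - 1|) P) :
    |P.real {ω | (∑ j ∈ range n, a (Z ω) j * W ω j) / √(d (W ω) * d (Z ω)) ≤ z}
        - (gaussianReal 0 1 (Set.Iic z)).toReal|
      ≤ 3 * (∫ ω, |d (W ω) - 1| ∂P) + 3 * (∫ ω, |d (Z ω) - 1| ∂P)
        + 2 * ∫ ω, |qf K n (a (Z ω)) - 1| ∂P := by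
  have hc := cond_cdf hW hZ hI hGW ha z hv
  have pW := pos_prob hdW
  have pZ := pos_prob hdZ
  have nW : 0 ≤ ∫ ω, |d (W ω) - 1| ∂P := integral_nonneg fun _ => abs_nonneg _
  have nZ : 0 ≤ ∫ ω, |d (Z ω) - 1| ∂P := integral_nonneg fun _ => abs_nonneg _
  suffices h : |P.real {ω | (∑ j ∈ range n, a (Z ω) j * W ω j) / √(d (W ω) * d (Z ω)) ≤ z} -
      P.real {ω | ∑ j ∈ range n, a (Z ω) j * W ω j ≤ z}| ≤
      3 * (∫ ω, |d (W ω) - 1| ∂P) + 3 * (∫ ω, |d (Z ω) - 1| ∂P) by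
    have := abs_sub_le (P.real {ω | (∑ j ∈ range n, a (Z ω) j * W ω j) / √(d (W ω) * d (Z ω)) ≤ z})
      (P.real {ω | ∑ j ∈ range n, a (Z ω) j * W ω j ≤ z}) (gaussianReal 0 1 (Set.Iic z)).toReal
    linarith
  rcases eq_or_ne z 0 with rfl | hz
  · refine (symdiff_bound (E := {ω | d (W ω) ≤ 0} ∪ {ω | d (Z ω) ≤ 0}) ?_).trans ?_
    · intro ω hω
      simp only [Set.mem_union, Set.mem_ofPred_eq, not_or, not_le] at hω ⊢
      rw [div_le_iff₀ (Real.sqrt_pos.2 (mul_pos hω.1 hω.2)), zero_mul]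
    · refine (measureReal_union_le _ _).trans ?_
      linarith
  · have iZ := cond_interval hW hZ hI hGW ha hd hz hdZ
    have iW := cond_interval hZ hW hI.symm hGZ ha hd hz hdW
    simp only [← hsymm] at iW
    refine (symdiff_bound (E := ({ω | d (W ω) ≤ 0} ∪ {ω | d (Z ω) ≤ 0}) ∪
      ({ω | ∑ j ∈ range n, a (Z ω) j * W ω j ∈ Set.uIcc z (z * d (Z ω))} ∪
       {ω | ∑ j ∈ range n, a (Z ω) j * W ω j ∈ Set.uIcc z (z * d (W ω))})) ?_).trans ?_
    · intro ω hω
      simp only [Set.mem_union, Set.mem_ofPred_eq, not_or, not_le] at hω ⊢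
      exact ptwise hω.1.1 hω.1.2 hz hω.2.2 hω.2.1
    · have u1 := measureReal_union_le (μ := P) ({ω | d (W ω) ≤ 0} ∪ {ω | d (Z ω) ≤ 0})
       ({ω | ∑ j ∈ range n, a (Z ω) j * W ω j ∈ Set.uIcc z (z * d (Z ω))} ∪
       {ω | ∑ j ∈ range n, a (Z ω) j * W ω j ∈ Set.uIcc z (z * d (W ω))})
      have u2 := measureReal_union_le (μ := P) {ω | d (W ω) ≤ 0} {ω | d (Z ω) ≤ 0}
      have u3 := measureReal_union_le (μ := P)
       {ω | ∑ j ∈ range n, a (Z ω) j * W ω j ∈ Set.uIcc z (z * d (Z ω))}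
       {ω | ∑ j ∈ range n, a (Z ω) j * W ω j ∈ Set.uIcc z (z * d (W ω))}
      linarith

end core


set_option linter.unusedSectionVars false

section moments
variable {Ω' : Type} [MeasurableSpace Ω'] {P : Measure Ω'} [IsProbabilityMeasure P]

lemma second_moment {ι : Type*} (s : Finset ι) (c : ι → ℝ) (f : ι → Ω' → ℝ) (C : ι → ι → ℝ)
    (h : ∀ p q, Integrable (fun ω => f p ω * f q ω) P)
    (hC : ∀ p q, ∫ ω, f p ω * f q ω ∂P = C p q) :
    Integrable (fun ω => (∑ p ∈ s, c p * f p ω) ^ 2) P ∧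
    ∫ ω, (∑ p ∈ s, c p * f p ω) ^ 2 ∂P = ∑ p ∈ s, ∑ q ∈ s, c p * c q * C p q := by
  have e : (fun ω => (∑ p ∈ s, c p * f p ω) ^ 2)
      = fun ω => ∑ p ∈ s, ∑ q ∈ s, c p * c q * (f p ω * f q ω) := by
    funext ω
    rw [sq, Finset.sum_mul_sum]
    refine Finset.sum_congr rfl fun p _ => Finset.sum_congr rfl fun q _ => by ring
  have hi : ∀ p q, Integrable (fun ω => c p * c q * (f p ω * f q ω)) P :=
    fun p q => (h p q).const_mul _
  rw [e]
  refine ⟨integrable_finsetSum _ fun p _ => integrable_finsetSum _ fun q _ => hi p q, ?_⟩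
  rw [integral_finsetSum _ fun p _ => integrable_finsetSum _ fun q _ => hi p q]
  refine Finset.sum_congr rfl fun p _ => ?_
  rw [integral_finsetSum _ fun q _ => hi p q]
  refine Finset.sum_congr rfl fun q _ => ?_
  rw [integral_const_mul, hC]

/-- the OU covariance kernel -/
def kOU (θ s t : ℝ) : ℝ := (Real.exp (-θ * |t - s|) - Real.exp (-θ * (t + s))) / (2 * θ)

lemma kOU_symm (θ s t : ℝ) : kOU θ s t = kOU θ t s := by
  unfold kOU; rw [abs_sub_comm, add_comm]

lemma g_second (v : ℝ≥0) : ∫ x, x ^ 2 ∂(gaussianReal 0 v) = v := by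
  have h := variance_fun_id_gaussianReal (μ := 0) (v := v)
  rw [variance_of_integral_eq_zero (by fun_prop) (by simp)] at h
  exact h

structure GProc (P : Measure Ω') (κ : ℝ → ℝ → ℝ) (Y : ℝ → Ω' → ℝ) : Prop where
  meas : ∀ t, Measurable (Y t)
  gaussian : ∀ (n : ℕ) (t : Fin n → ℝ) (c : Fin n → ℝ), (∀ j, 0 ≤ t j) →
      ∃ v : NNReal, Measure.map (fun ω => ∑ j, c j * Y (t j) ω) P = gaussianReal 0 v
  cov : ∀ (s t : ℝ), 0 ≤ s → 0 ≤ t → ∫ ω, Y s ω * Y t ω ∂P = κ s t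
  symm : ∀ s t, κ s t = κ t s

variable {κ : ℝ → ℝ → ℝ} {Y : ℝ → Ω' → ℝ}

lemma GProc.memLp (h : GProc P κ Y) {t : ℝ} (ht : 0 ≤ t) : MemLp (Y t) 4 P := by
  obtain ⟨v, hv⟩ := h.gaussian 1 (fun _ => t) (fun _ => 1) (fun _ => ht)
  simp only [Finset.univ_unique, Finset.sum_singleton, one_mul] at hv
  have h1 := memLp_id_gaussianReal' (μ := 0) (v := v) 4 (by norm_num)
  rw [← hv] at h1
  exact (memLp_map_measure_iff (by fun_prop) (h.meas t).aemeasurable).1 h1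

lemma GProc.int2 (h : GProc P κ Y) {s t : ℝ} (hs : 0 ≤ s) (ht : 0 ≤ t) :
    Integrable (fun ω => Y s ω * Y t ω) P :=
  ((h.memLp hs).mono_exponent (by norm_num : (2:ℝ≥0∞) ≤ 4)).integrable_mul
    ((h.memLp ht).mono_exponent (by norm_num : (2:ℝ≥0∞) ≤ 4))

lemma GProc.memLp2 (h : GProc P κ Y) {s t : ℝ} (hs : 0 ≤ s) (ht : 0 ≤ t) :
    MemLp (fun ω => Y s ω * Y t ω) 2 P := by
  have : ENNReal.HolderTriple 4 4 2 := ⟨by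
    rw [← two_mul, show (4:ℝ≥0∞) = 2 * 2 by norm_num, ENNReal.mul_inv (by simp) (by simp), ← mul_assoc,
      ENNReal.mul_inv_cancel (by simp) (by simp), one_mul]⟩
  exact (h.memLp ht).mul (h.memLp hs)

lemma GProc.int4 (h : GProc P κ Y) {s t u w : ℝ} (hs : 0 ≤ s) (ht : 0 ≤ t) (hu : 0 ≤ u) (hw : 0 ≤ w) :
    Integrable (fun ω => (Y s ω * Y t ω) * (Y u ω * Y w ω)) P :=
  (h.memLp2 hs ht).integrable_mul (h.memLp2 hu hw)

lemma GProc.var (h : GProc P κ Y) (n : ℕ) (t : Fin n → ℝ) (c : Fin n → ℝ) (ht : ∀ j, 0 ≤ t j) :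
    ∃ v : ℝ≥0, (v:ℝ) = ∑ i, ∑ j, c i * c j * κ (t i) (t j) ∧
      P.map (fun ω => ∑ j, c j * Y (t j) ω) = gaussianReal 0 v := by
  obtain ⟨v, hv⟩ := h.gaussian n t c ht
  refine ⟨v, ?_, hv⟩
  have h1 := g_second v
  have hm : Measurable (fun ω => ∑ j, c j * Y (t j) ω) :=
    Finset.measurable_sum _ fun j _ => (h.meas _).const_mul _
  rw [← hv, integral_map hm.aemeasurable (by fun_prop)] at h1
  rw [← h1]
  exact (second_moment Finset.univ c (fun j => Y (t j)) (fun i j => κ (t i) (t j))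
    (fun p q => h.int2 (ht p) (ht q)) (fun p q => h.cov _ _ (ht p) (ht q))).2

lemma GProc.fourth (h : GProc P κ Y) (t : Fin 4 → ℝ) (c : Fin 4 → ℝ) (ht : ∀ j, 0 ≤ t j) :
    Integrable (fun ω => (∑ j, c j * Y (t j) ω) ^ 4) P ∧
    ∫ ω, (∑ j, c j * Y (t j) ω) ^ 4 ∂P = 3 * (∑ i, ∑ j, c i * c j * κ (t i) (t j)) ^ 2 := by
  obtain ⟨v, hv, hm⟩ := h.var 4 t c ht
  have hme : Measurable (fun ω => ∑ j, c j * Y (t j) ω) :=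
    Finset.measurable_sum _ fun j _ => (h.meas _).const_mul _
  have h1 := g_fourth v
  rw [← hm, integral_map hme.aemeasurable (by fun_prop), hv] at h1
  refine ⟨?_, h1⟩
  have h2 : Integrable (fun x : ℝ => x ^ 4) (gaussianReal 0 v) := by
    have := (memLp_id_gaussianReal' (μ := 0) (v := v) 4 (by norm_num)).integrable_norm_pow (p := 4) (by norm_num)
    refine this.congr (Eventually.of_forall fun x => ?_)
    simp only [id, Real.norm_eq_abs]
    exact Even.pow_abs (by decide) x
  rw [← hm] at h2
  exact (integrable_map_measure (by fun_prop) hme.aemeasurable).1 h2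

lemma hi_add {f g : Ω' → ℝ} {m k : ℝ} (hf : Integrable f P ∧ ∫ ω, f ω ∂P = m)
    (hg : Integrable g P ∧ ∫ ω, g ω ∂P = k) :
    Integrable (fun ω => f ω + g ω) P ∧ ∫ ω, f ω + g ω ∂P = m + k :=
  ⟨hf.1.add hg.1, by rw [integral_add hf.1 hg.1, hf.2, hg.2]⟩

lemma hi_sub {f g : Ω' → ℝ} {m k : ℝ} (hf : Integrable f P ∧ ∫ ω, f ω ∂P = m)
    (hg : Integrable g P ∧ ∫ ω, g ω ∂P = k) :
    Integrable (fun ω => f ω - g ω) P ∧ ∫ ω, f ω - g ω ∂P = m - k :=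
  ⟨hf.1.sub hg.1, by rw [integral_sub hf.1 hg.1, hf.2, hg.2]⟩

lemma GProc.isserlis (h : GProc P κ Y) {s t u w : ℝ} (hs : 0 ≤ s) (ht : 0 ≤ t) (hu : 0 ≤ u) (hw : 0 ≤ w) :
    ∫ ω, (Y s ω * Y t ω) * (Y u ω * Y w ω) ∂P
      = κ s t * κ u w + κ s u * κ t w + κ s w * κ t u := by
  have hh : ∀ j, 0 ≤ (![s, t, u, w] : Fin 4 → ℝ) j := by
    intro j; fin_cases j <;> simp [hs, ht, hu, hw]
  have F : ∀ a b c : ℝ, Integrable (fun ω => (Y s ω + a * Y t ω + b * Y u ω + c * Y w ω) ^ 4) P ∧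
      ∫ ω, (Y s ω + a * Y t ω + b * Y u ω + c * Y w ω) ^ 4 ∂P = 3 * (κ s s + a ^ 2 * κ t t
        + b ^ 2 * κ u u + c ^ 2 * κ w w + 2 * a * κ s t + 2 * b * κ s u + 2 * c * κ s w
        + 2 * a * b * κ t u + 2 * a * c * κ t w + 2 * b * c * κ u w) ^ 2 := by
    intro a b c
    have := h.fourth ![s, t, u, w] ![1, a, b, c] hh
    simp only [Fin.sum_univ_four, Matrix.cons_val_zero, Matrix.cons_val_one, Matrix.cons_val,
      one_mul, mul_one] at this
    refine ⟨this.1, this.2.trans ?_⟩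
    rw [h.symm t s, h.symm u s, h.symm w s, h.symm u t, h.symm w t, h.symm w u]
    ring
  have e : (fun ω => (Y s ω * Y t ω) * (Y u ω * Y w ω)) = fun ω =>
      (1/192) * ((Y s ω + 1 * Y t ω + 1 * Y u ω + 1 * Y w ω) ^ 4
      - (Y s ω + 1 * Y t ω + 1 * Y u ω + (-1) * Y w ω) ^ 4
      - (Y s ω + 1 * Y t ω + (-1) * Y u ω + 1 * Y w ω) ^ 4
      + (Y s ω + 1 * Y t ω + (-1) * Y u ω + (-1) * Y w ω) ^ 4
      - (Y s ω + (-1) * Y t ω + 1 * Y u ω + 1 * Y w ω) ^ 4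
      + (Y s ω + (-1) * Y t ω + 1 * Y u ω + (-1) * Y w ω) ^ 4
      + (Y s ω + (-1) * Y t ω + (-1) * Y u ω + 1 * Y w ω) ^ 4
      - (Y s ω + (-1) * Y t ω + (-1) * Y u ω + (-1) * Y w ω) ^ 4) := by
    funext ω; ring
  have f1 := F 1 1 1
  have f2 := F 1 1 (-1)
  have f3 := F 1 (-1) 1
  have f4 := F 1 (-1) (-1)
  have f5 := F (-1) 1 1
  have f6 := F (-1) 1 (-1)
  have f7 := F (-1) (-1) 1
  have f8 := F (-1) (-1) (-1)
  have hall := hi_sub (hi_add (hi_add (hi_sub (hi_add (hi_sub (hi_sub f1 f2) f3) f4) f5) f6) f7) f8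
  rw [e, integral_const_mul, hall.2]
  ring

/-- second-order moment data of a sequence -/
structure Mom (P : Measure Ω') (K : ℕ → ℕ → ℝ) (Z : Ω' → ℕ → ℝ) : Prop where
  int1 : ∀ i, Integrable (fun ω => Z ω i) P
  int2 : ∀ i j, Integrable (fun ω => Z ω i * Z ω j) P
  int4 : ∀ i j k l, Integrable (fun ω => (Z ω i * Z ω j) * (Z ω k * Z ω l)) P
  m2 : ∀ i j, ∫ ω, Z ω i * Z ω j ∂P = K i j
  m4 : ∀ i j k l, ∫ ω, (Z ω i * Z ω j) * (Z ω k * Z ω l) ∂P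
      = K i j * K k l + K i k * K j l + K i l * K j k

lemma GProc.mom (h : GProc P κ Y) {D : ℝ} (hD : 0 ≤ D) :
    Mom P (fun i j => κ (i * D) (j * D)) (fun ω k => Y (k * D) ω) where
  int1 i := (h.memLp (by positivity)).integrable (by norm_num)
  int2 i j := h.int2 (by positivity) (by positivity)
  int4 i j k l := h.int4 (by positivity) (by positivity) (by positivity) (by positivity)
  m2 i j := h.cov _ _ (by positivity) (by positivity)
  m4 i j k l := h.isserlis (by positivity) (by positivity) (by positivity) (by positivity)

lemma GProc.isG (h : GProc P κ Y) {D : ℝ} (hD : 0 ≤ D) (n : ℕ) :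
    IsG P (fun i j => κ (i * D) (j * D)) n (fun ω k => Y (k * D) ω) := by
  intro c
  obtain ⟨v, hv, hm⟩ := h.var n (fun j => (j:ℕ) * D) (fun j => c j) (fun j => by positivity)
  refine ⟨v, ?_, ?_⟩
  · rw [hv, qf, Finset.sum_range]
    refine Finset.sum_congr rfl fun i _ => ?_
    rw [Finset.sum_range]
  · rw [← hm]
    congr 1
    funext ω
    rw [Finset.sum_range]

end moments


section bounds
variable {Ω' : Type} [MeasurableSpace Ω'] {P : Measure Ω'} [IsProbabilityMeasure P]
variable {K : ℕ → ℕ → ℝ} {n : ℕ} {M r : ℝ} {Z : Ω' → ℕ → ℝ}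

lemma hi_cmul {f : Ω' → ℝ} {m : ℝ} (c : ℝ) (hf : Integrable f P ∧ ∫ ω, f ω ∂P = m) :
    Integrable (fun ω => c * f ω) P ∧ ∫ ω, c * f ω ∂P = c * m :=
  ⟨hf.1.const_mul _, by rw [integral_const_mul, hf.2]⟩

lemma hi_const (c : ℝ) : Integrable (fun _ : Ω' => c) P ∧ ∫ _ω : Ω', c ∂P = c :=
  ⟨integrable_const _, by simp⟩

structure KB (K : ℕ → ℕ → ℝ) (n : ℕ) (M r : ℝ) : Prop where
  nonneg : ∀ i j, 0 ≤ K i j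
  le : ∀ i j, K i j ≤ M
  symm : ∀ i j, K i j = K j i
  row : ∀ i, ∑ j ∈ range n, K i j ≤ r

lemma KB.Mnn (h : KB K n M r) : 0 ≤ M := (h.nonneg 0 0).trans (h.le 0 0)
lemma KB.rnn (h : KB K n M r) : 0 ≤ r := (Finset.sum_nonneg fun j _ => h.nonneg 0 j).trans (h.row 0)

lemma KB.wrow (h : KB K n M r) (i : ℕ) {g : ℕ → ℝ} {B : ℝ} (hB : 0 ≤ B) (hg : ∀ j, g j ≤ B) :
    ∑ j ∈ range n, K i j * g j ≤ r * B := by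
  calc _ ≤ ∑ j ∈ range n, K i j * B := Finset.sum_le_sum fun j _ =>
        mul_le_mul_of_nonneg_left (hg j) (h.nonneg i j)
    _ = (∑ j ∈ range n, K i j) * B := by rw [Finset.sum_mul]
    _ ≤ _ := mul_le_mul_of_nonneg_right (h.row i) hB

lemma sum_le_n {g : ℕ → ℝ} {B : ℝ} (hg : ∀ j, g j ≤ B) : ∑ j ∈ range n, g j ≤ n * B := by
  calc _ ≤ ∑ j ∈ range n, B := Finset.sum_le_sum fun j _ => hg j
    _ = _ := by simp

lemma Mom.cov (h : Mom P K Z) (i j k l : ℕ) :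
    Integrable (fun ω => (Z ω i * Z ω j - K i j) * (Z ω k * Z ω l - K k l)) P ∧
    ∫ ω, (Z ω i * Z ω j - K i j) * (Z ω k * Z ω l - K k l) ∂P = K i k * K j l + K i l * K j k := by
  have e : (fun ω => (Z ω i * Z ω j - K i j) * (Z ω k * Z ω l - K k l)) = fun ω =>
    (((Z ω i * Z ω j) * (Z ω k * Z ω l) - K k l * (Z ω i * Z ω j)) - K i j * (Z ω k * Z ω l)) + K i j * K k l := by
    funext ω; ring
  have c1 : Integrable (fun ω => K k l * (Z ω i * Z ω j)) P ∧ ∫ ω, K k l * (Z ω i * Z ω j) ∂P = K k l * K i j :=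
    ⟨(h.int2 i j).const_mul _, by rw [integral_const_mul, h.m2]⟩
  have c2 : Integrable (fun ω => K i j * (Z ω k * Z ω l)) P ∧ ∫ ω, K i j * (Z ω k * Z ω l) ∂P = K i j * K k l :=
    ⟨(h.int2 k l).const_mul _, by rw [integral_const_mul, h.m2]⟩
  have c3 : Integrable (fun _ : Ω' => K i j * K k l) P ∧ ∫ _ω : Ω', K i j * K k l ∂P = K i j * K k l :=
    ⟨integrable_const _, by simp⟩
  have := hi_add (hi_sub (hi_sub ⟨h.int4 i j k l, h.m4 i j k l⟩ c1) c2) c3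
  rw [e]
  refine ⟨this.1, this.2.trans ?_⟩
  ring

lemma Mom.B1 (h : Mom P K Z) (hK : KB K n M r) :
    Integrable (fun ω => (∑ k ∈ range n, 1 * (Z ω k * Z ω k - K k k)) ^ 2) P ∧
    ∫ ω, (∑ k ∈ range n, 1 * (Z ω k * Z ω k - K k k)) ^ 2 ∂P ≤ 2 * M * n * r := by
  have := second_moment (range n) (fun _ => 1) (fun k ω => Z ω k * Z ω k - K k k) _
    (fun p q => (h.cov p p q q).1) (fun p q => (h.cov p p q q).2)
  refine ⟨this.1, this.2.trans_le ?_⟩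
  calc _ ≤ n * (r * (2 * M)) := by
        refine sum_le_n fun i => ?_
        calc _ = ∑ j ∈ range n, K i j * (2 * K i j) := Finset.sum_congr rfl fun j _ => by ring
          _ ≤ _ := hK.wrow i (by linarith [hK.Mnn]) fun j => by linarith [hK.le i j]
    _ = _ := by ring

lemma Mom.B2 (h : Mom P K Z) (hK : KB K n M r) :
    Integrable (fun ω => (∑ p ∈ range n ×ˢ range n, K p.1 p.2 * (Z ω p.1 * Z ω p.2 - K p.1 p.2)) ^ 2) P ∧
    ∫ ω, (∑ p ∈ range n ×ˢ range n, K p.1 p.2 * (Z ω p.1 * Z ω p.2 - K p.1 p.2)) ^ 2 ∂P ≤ 2 * M * n * r ^ 3 := by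
  have := second_moment (range n ×ˢ range n) (fun p => K p.1 p.2)
    (fun p ω => Z ω p.1 * Z ω p.2 - K p.1 p.2) _
    (fun p q => (h.cov p.1 p.2 q.1 q.2).1) (fun p q => (h.cov p.1 p.2 q.1 q.2).2)
  refine ⟨this.1, this.2.trans_le ?_⟩
  have hM := hK.Mnn
  have hr := hK.rnn
  simp only [Finset.sum_product]
  calc _ ≤ ∑ i ∈ range n, ∑ j ∈ range n, ∑ k ∈ range n, ∑ l ∈ range n,
          (K i j * (K i k * (K k l * M)) + K i j * (K j k * (K k l * M))) := by
        refine Finset.sum_le_sum fun i _ => Finset.sum_le_sum fun j _ =>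
          Finset.sum_le_sum fun k _ => Finset.sum_le_sum fun l _ => ?_
        have a1 : K i j * K k l * (K i k * K j l) ≤ K i j * (K i k * (K k l * M)) := by
          have : K i j * K k l * (K i k * K j l) = (K i j * K i k * K k l) * K j l := by ring
          rw [this]
          have : K i j * (K i k * (K k l * M)) = (K i j * K i k * K k l) * M := by ring
          rw [this]
          exact mul_le_mul_of_nonneg_left (hK.le _ _)
            (mul_nonneg (mul_nonneg (hK.nonneg _ _) (hK.nonneg _ _)) (hK.nonneg _ _))
        have a2 : K i j * K k l * (K i l * K j k) ≤ K i j * (K j k * (K k l * M)) := by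
          have : K i j * K k l * (K i l * K j k) = (K i j * K j k * K k l) * K i l := by ring
          rw [this]
          have : K i j * (K j k * (K k l * M)) = (K i j * K j k * K k l) * M := by ring
          rw [this]
          exact mul_le_mul_of_nonneg_left (hK.le _ _)
            (mul_nonneg (mul_nonneg (hK.nonneg _ _) (hK.nonneg _ _)) (hK.nonneg _ _))
        linarith
    _ = (∑ i ∈ range n, ∑ j ∈ range n, K i j * ∑ k ∈ range n, K i k * ∑ l ∈ range n, K k l * M)
        + ∑ i ∈ range n, ∑ j ∈ range n, K i j * ∑ k ∈ range n, K j k * ∑ l ∈ range n, K k l * M := by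
        simp only [Finset.sum_add_distrib, Finset.mul_sum]
    _ ≤ n * (r * (r * (r * M))) + n * (r * (r * (r * M))) := by
        refine add_le_add ?_ ?_
        · refine sum_le_n fun i => hK.wrow i (by positivity) fun j => hK.wrow i (by positivity) fun k =>
            hK.wrow k hM fun l => le_rfl
        · refine sum_le_n fun i => hK.wrow i (by positivity) fun j => hK.wrow j (by positivity) fun k =>
            hK.wrow k hM fun l => le_rfl
    _ = _ := by ring

lemma Mom.B34 (h : Mom P K Z) (hK : KB K n M r) {c : ℕ → ℝ} {B : ℝ} (hc0 : ∀ k, 0 ≤ c k) (hc : ∀ k, c k ≤ B) :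
    Integrable (fun ω => (∑ k ∈ range n, c k * Z ω k) ^ 2) P ∧
    ∫ ω, (∑ k ∈ range n, c k * Z ω k) ^ 2 ∂P ≤ n * r * B ^ 2 := by
  have := second_moment (range n) c (fun k ω => Z ω k) _
    (fun p q => h.int2 p q) (fun p q => h.m2 p q)
  refine ⟨this.1, this.2.trans_le ?_⟩
  have hB : 0 ≤ B := (hc0 0).trans (hc 0)
  calc _ ≤ n * (r * B ^ 2) := by
        refine sum_le_n fun i => ?_
        calc _ = ∑ j ∈ range n, K i j * (c i * c j) := Finset.sum_congr rfl fun j _ => by ring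
          _ ≤ _ := hK.wrow i (by positivity) fun j => by
            rw [sq]; exact mul_le_mul (hc i) (hc j) (hc0 j) hB
    _ = _ := by ring

lemma abs_amgm {f : Ω' → ℝ} (hf : Integrable f P) (hf2 : Integrable (fun ω => f ω ^ 2) P) {B l : ℝ}
    (hB : ∫ ω, f ω ^ 2 ∂P ≤ B) (hl : 0 < l) : ∫ ω, |f ω| ∂P ≤ (l + B / l) / 2 := by
  calc ∫ ω, |f ω| ∂P ≤ ∫ ω, (l / 2 + (1 / (2 * l)) * f ω ^ 2) ∂P := by
        refine integral_mono hf.abs ((integrable_const _).add (hf2.const_mul _)) fun ω => ?_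
        have : l / 2 + (1 / (2 * l)) * f ω ^ 2 - |f ω| = (l - |f ω|) ^ 2 / (2 * l) := by
          rw [← sq_abs (f ω)]; field_simp; ring
        have h2 : 0 ≤ (l - |f ω|) ^ 2 / (2 * l) := by positivity
        simp only
        linarith
    _ = l / 2 + (1 / (2 * l)) * ∫ ω, f ω ^ 2 ∂P := by
        rw [integral_add (integrable_const _) (hf2.const_mul _), integral_const_mul]; simp
    _ ≤ l / 2 + (1 / (2 * l)) * B := by gcongr
    _ = _ := by field_simp

/-- the empirical mean -/
def mn (n : ℕ) (ζ : ℕ → ℝ) : ℝ := (1 / n) * ∑ k ∈ range n, ζ k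

def dfun (θ : ℝ) (n : ℕ) (ζ : ℕ → ℝ) : ℝ :=
  2 * θ * ((1 / n) * (∑ k ∈ range n, ζ k * ζ k) - mn n ζ * mn n ζ)

lemma Mom.mn2 (h : Mom P K Z) (hK : KB K n M r) (hn : 0 < n) :
    Integrable (fun ω => mn n (Z ω) ^ 2) P ∧ ∫ ω, mn n (Z ω) ^ 2 ∂P ≤ r / n := by
  have := h.B34 (n := n) hK (c := fun _ => 1) (B := 1) (fun _ => zero_le_one) (fun _ => le_rfl)
  simp only [one_mul] at this
  have e : (fun ω => mn n (Z ω) ^ 2) = fun ω => (1 / (n:ℝ)) ^ 2 * (∑ k ∈ range n, Z ω k) ^ 2 := by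
    funext ω; unfold mn; ring
  have hn' : (0:ℝ) < n := by exact_mod_cast hn
  rw [e]
  refine ⟨this.1.const_mul _, ?_⟩
  rw [integral_const_mul]
  calc _ ≤ (1 / (n:ℝ)) ^ 2 * (n * r * 1 ^ 2) := by gcongr; exact this.2
    _ = _ := by field_simp

lemma Mom.dbound (h : Mom P K Z) (hK : KB K n M r) (hn : 0 < n) {θ l : ℝ} (hθ : 0 < θ) (hl : 0 < l) :
    Integrable (fun ω => |dfun θ n (Z ω) - 1|) P ∧
    ∫ ω, |dfun θ n (Z ω) - 1| ∂P ≤ 2 * θ / n * ((l + 2 * M * n * r / l) / 2)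
      + |2 * θ / n * (∑ k ∈ range n, K k k) - 1| + 2 * θ * (r / n) := by
  have b1 := h.B1 hK
  have b3 := h.mn2 hK hn
  have i0 : Integrable (fun ω => ∑ k ∈ range n, 1 * (Z ω k * Z ω k - K k k)) P :=
    integrable_finsetSum _ fun k _ => ((h.int2 k k).sub (integrable_const _)).const_mul _
  have e : ∀ ω, dfun θ n (Z ω) - 1 = 2 * θ / n * (∑ k ∈ range n, 1 * (Z ω k * Z ω k - K k k))
      + (2 * θ / n * (∑ k ∈ range n, K k k) - 1) - 2 * θ * mn n (Z ω) ^ 2 := by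
    intro ω
    unfold dfun
    simp only [one_mul, Finset.sum_sub_distrib]
    ring
  have iD : Integrable (fun ω => dfun θ n (Z ω) - 1) P := by
    simp only [e]
    exact ((i0.const_mul _).add (integrable_const _)).sub (b3.1.const_mul _)
  refine ⟨iD.abs, ?_⟩
  have hn' : (0:ℝ) < n := by exact_mod_cast hn
  calc ∫ ω, |dfun θ n (Z ω) - 1| ∂P ≤ ∫ ω, (2 * θ / n * |∑ k ∈ range n, 1 * (Z ω k * Z ω k - K k k)|
      + |2 * θ / n * (∑ k ∈ range n, K k k) - 1| + 2 * θ * mn n (Z ω) ^ 2) ∂P := by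
        refine integral_mono iD.abs (((i0.abs.const_mul _).add (integrable_const _)).add (b3.1.const_mul _)) fun ω => ?_
        simp only [e]
        refine (abs_sub _ _).trans (add_le_add ((abs_add_le _ _).trans (add_le_add ?_ le_rfl)) ?_)
        · rw [abs_mul, abs_of_nonneg (by positivity : 0 ≤ 2 * θ / (n:ℝ))]
        · rw [abs_of_nonneg (by positivity)]
    _ = 2 * θ / n * (∫ ω, |∑ k ∈ range n, 1 * (Z ω k * Z ω k - K k k)| ∂P)
      + |2 * θ / n * (∑ k ∈ range n, K k k) - 1| + 2 * θ * ∫ ω, mn n (Z ω) ^ 2 ∂P := by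
        exact (hi_add (hi_add (hi_cmul _ ⟨i0.abs, rfl⟩) (hi_const _)) (hi_cmul _ ⟨b3.1, rfl⟩)).2
    _ ≤ _ := by
        gcongr
        · exact abs_amgm i0 b1.1 b1.2 hl
        · exact b3.2

lemma qf_center (hK : KB K n M r) (g : ℝ) (ζ : ℕ → ℝ) :
    qf K n (fun j => g * (ζ j - mn n ζ)) = g ^ 2 * (∑ p ∈ range n ×ˢ range n, K p.1 p.2 * (ζ p.1 * ζ p.2 - K p.1 p.2))
     + g ^ 2 * (∑ p ∈ range n ×ˢ range n, K p.1 p.2 ^ 2)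
     - g ^ 2 * (2 * mn n ζ * ∑ k ∈ range n, (∑ j ∈ range n, K k j) * ζ k)
     + g ^ 2 * (mn n ζ ^ 2 * ∑ k ∈ range n, ∑ j ∈ range n, K k j) := by
  have e1 : ∑ k ∈ range n, (∑ j ∈ range n, K k j) * ζ k = ∑ k ∈ range n, ∑ j ∈ range n, K k j * ζ j := by
    simp only [Finset.sum_mul]
    rw [Finset.sum_comm]
    refine Finset.sum_congr rfl fun i _ => Finset.sum_congr rfl fun j _ => ?_
    rw [hK.symm]
  have e2 : 2 * mn n ζ * ∑ k ∈ range n, (∑ j ∈ range n, K k j) * ζ k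
      = mn n ζ * (∑ k ∈ range n, ∑ j ∈ range n, K k j * ζ k) + mn n ζ * ∑ k ∈ range n, ∑ j ∈ range n, K k j * ζ j := by
    rw [← e1]; simp only [Finset.sum_mul]; ring
  rw [e2]
  generalize mn n ζ = m
  unfold qf
  simp only [Finset.sum_product, Finset.mul_sum, ← Finset.sum_add_distrib, ← Finset.sum_sub_distrib]
  refine Finset.sum_congr rfl fun i _ => Finset.sum_congr rfl fun j _ => ?_
  ring

lemma Mom.vbound (h : Mom P K Z) (hK : KB K n M r) (hn : 0 < n) (hr : 0 < r) {g l : ℝ} (hl : 0 < l) :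
    Integrable (fun ω => |qf K n (fun j => g * (Z ω j - mn n (Z ω))) - 1|) P ∧
    ∫ ω, |qf K n (fun j => g * (Z ω j - mn n (Z ω))) - 1| ∂P ≤ g ^ 2 * ((l + 2 * M * n * r ^ 3 / l) / 2)
      + |g ^ 2 * (∑ p ∈ range n ×ˢ range n, K p.1 p.2 ^ 2) - 1| + g ^ 2 * (3 * r ^ 2) := by
  have hn' : (0:ℝ) < n := by exact_mod_cast hn
  have b2 := h.B2 hK
  have b3 := h.mn2 hK hn
  have b4 := h.B34 (n := n) hK (c := fun k => ∑ j ∈ range n, K k j) (B := r)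
    (fun k => Finset.sum_nonneg fun j _ => hK.nonneg k j) (fun k => hK.row k)
  set s : ℝ := ∑ k ∈ range n, ∑ j ∈ range n, K k j with hs
  have hs0 : 0 ≤ s := Finset.sum_nonneg fun k _ => Finset.sum_nonneg fun j _ => hK.nonneg k j
  have hsn : s ≤ n * r := sum_le_n fun k => hK.row k
  set L : Ω' → ℝ := fun ω => ∑ k ∈ range n, (∑ j ∈ range n, K k j) * Z ω k with hL
  set Q : Ω' → ℝ := fun ω => ∑ p ∈ range n ×ˢ range n, K p.1 p.2 * (Z ω p.1 * Z ω p.2 - K p.1 p.2) with hQ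
  set S2 : ℝ := ∑ p ∈ range n ×ˢ range n, K p.1 p.2 ^ 2 with hS2
  have i0 : Integrable Q P :=
    integrable_finsetSum _ fun p _ => ((h.int2 p.1 p.2).sub (integrable_const _)).const_mul _
  have imL : Integrable (fun ω => mn n (Z ω) * L ω) P := by
    have e : (fun ω => mn n (Z ω) * L ω) = fun ω => ∑ k ∈ range n, ∑ i ∈ range n,
        (1 / (n:ℝ)) * (∑ j ∈ range n, K i j) * (Z ω k * Z ω i) := by
      funext ω
      simp only [mn, hL]
      rw [mul_assoc, Finset.sum_mul_sum, Finset.mul_sum]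
      refine Finset.sum_congr rfl fun k _ => ?_
      rw [Finset.mul_sum]
      refine Finset.sum_congr rfl fun i _ => by ring
    rw [e]
    exact integrable_finsetSum _ fun k _ => integrable_finsetSum _ fun i _ => (h.int2 k i).const_mul _
  have e : ∀ ω, qf K n (fun j => g * (Z ω j - mn n (Z ω))) - 1 = g ^ 2 * Q ω + (g ^ 2 * S2 - 1)
      - g ^ 2 * (2 * (mn n (Z ω) * L ω)) + g ^ 2 * (s * mn n (Z ω) ^ 2) := by
    intro ω
    rw [qf_center hK]
    simp only [hQ, hL, hS2, hs]
    ring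
  have iD : Integrable (fun ω => qf K n (fun j => g * (Z ω j - mn n (Z ω))) - 1) P := by
    simp only [e]
    exact (((i0.const_mul _).add (integrable_const _)).sub ((imL.const_mul _).const_mul _)).add ((b3.1.const_mul _).const_mul _)
  refine ⟨iD.abs, ?_⟩
  have hb : ∀ ω, |2 * (mn n (Z ω) * L ω)| ≤ n * r * mn n (Z ω) ^ 2 + (1 / (n * r)) * L ω ^ 2 := by
    intro ω
    have hnr : 0 < n * r := by positivity
    have : n * r * mn n (Z ω) ^ 2 + (1 / (n * r)) * L ω ^ 2 - 2 * (|mn n (Z ω)| * |L ω|)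
        = (n * r * |mn n (Z ω)| - |L ω|) ^ 2 / (n * r) := by
      rw [← sq_abs (mn n (Z ω)), ← sq_abs (L ω)]; field_simp; ring
    have h2 : 0 ≤ (n * r * |mn n (Z ω)| - |L ω|) ^ 2 / (n * r) := by positivity
    rw [abs_mul, abs_mul, abs_two]
    linarith
  have ib : Integrable (fun ω => n * r * mn n (Z ω) ^ 2 + (1 / (n * r)) * L ω ^ 2 + s * mn n (Z ω) ^ 2) P :=
    ((b3.1.const_mul _).add (b4.1.const_mul _)).add (b3.1.const_mul _)
  calc ∫ ω, |qf K n (fun j => g * (Z ω j - mn n (Z ω))) - 1| ∂P ≤ ∫ ω, (g ^ 2 * |Q ω|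
      + |g ^ 2 * S2 - 1| + g ^ 2 * (n * r * mn n (Z ω) ^ 2 + (1 / (n * r)) * L ω ^ 2 + s * mn n (Z ω) ^ 2)) ∂P := by
        refine integral_mono iD.abs (((i0.abs.const_mul _).add (integrable_const _)).add (ib.const_mul _)) fun ω => ?_
        simp only [e]
        have t1 := abs_add_le (g ^ 2 * Q ω + (g ^ 2 * S2 - 1) - g ^ 2 * (2 * (mn n (Z ω) * L ω))) (g ^ 2 * (s * mn n (Z ω) ^ 2))
        have t2 := abs_sub (g ^ 2 * Q ω + (g ^ 2 * S2 - 1)) (g ^ 2 * (2 * (mn n (Z ω) * L ω)))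
        have t3 := abs_add_le (g ^ 2 * Q ω) (g ^ 2 * S2 - 1)
        have t4 : |g ^ 2 * Q ω| = g ^ 2 * |Q ω| := by rw [abs_mul, abs_of_nonneg (sq_nonneg g)]
        have t5 : |g ^ 2 * (2 * (mn n (Z ω) * L ω))| ≤ g ^ 2 * (n * r * mn n (Z ω) ^ 2 + (1 / (n * r)) * L ω ^ 2) := by
          rw [abs_mul, abs_of_nonneg (sq_nonneg g)]
          exact mul_le_mul_of_nonneg_left (hb ω) (sq_nonneg g)
        have t6 : |g ^ 2 * (s * mn n (Z ω) ^ 2)| = g ^ 2 * (s * mn n (Z ω) ^ 2) := abs_of_nonneg (by positivity)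
        linarith
    _ = g ^ 2 * (∫ ω, |Q ω| ∂P) + |g ^ 2 * S2 - 1| + g ^ 2 * (n * r * (∫ ω, mn n (Z ω) ^ 2 ∂P)
        + (1 / (n * r)) * (∫ ω, L ω ^ 2 ∂P) + s * ∫ ω, mn n (Z ω) ^ 2 ∂P) := by
        exact (hi_add (hi_add (hi_cmul _ ⟨i0.abs, rfl⟩) (hi_const _)) (hi_cmul _
          (hi_add (hi_add (hi_cmul _ ⟨b3.1, rfl⟩) (hi_cmul _ ⟨b4.1, rfl⟩)) (hi_cmul _ ⟨b3.1, rfl⟩)))).2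
    _ ≤ g ^ 2 * ((l + 2 * M * n * r ^ 3 / l) / 2) + |g ^ 2 * S2 - 1| + g ^ 2 * (n * r * (r / n)
        + (1 / (n * r)) * (n * r * r ^ 2) + n * r * (r / n)) := by
        gcongr
        · exact abs_amgm i0 b2.1 b2.2 hl
        · exact b3.2
        · exact b4.2
        · exact b3.2
    _ = _ := by
        congr 2
        field_simp
        ring

end bounds

section kern

lemma geo_inj {a : ℝ} (h0 : 0 ≤ a) (h1 : a < 1) (s : Finset ℕ) (f : ℕ → ℕ)
    (hf : ∀ x ∈ s, ∀ y ∈ s, f x = f y → x = y) : ∑ k ∈ s, a ^ f k ≤ 1 / (1 - a) := by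
  have e : ∑ k ∈ s, a ^ f k = ∑ m ∈ s.image f, a ^ m :=
    (Finset.sum_image (fun x hx y hy h => hf x hx y hy h)).symm
  rw [e, one_div, ← tsum_geometric_of_lt_one h0 h1]
  exact (summable_geometric_of_lt_one h0 h1).sum_le_tsum _ (fun i _ => pow_nonneg h0 i)

lemma geo_row {a : ℝ} (h0 : 0 ≤ a) (h1 : a < 1) (n i : ℕ) :
    ∑ j ∈ range n, a ^ ((i - j) + (j - i)) ≤ 2 * (1 / (1 - a)) := by
  rw [← Finset.sum_filter_add_sum_filter_not (range n) (fun j => j ≤ i), two_mul]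
  refine add_le_add ?_ ?_ <;>
  · refine geo_inj h0 h1 _ _ fun x hx y hy h => ?_
    simp only [Finset.mem_filter] at hx hy
    omega

lemma one_sub_exp {x : ℝ} (h0 : 0 < x) (h1 : x ≤ 1) : 1 / (1 - Real.exp (-x)) ≤ 2 / x := by
  have h2 : Real.exp (-x) ≤ 1 - x / 2 := by
    have h3 := Real.add_one_le_exp x
    rw [Real.exp_neg, inv_le_comm₀ (Real.exp_pos _) (by linarith)]
    refine le_trans ?_ h3
    rw [inv_le_iff_one_le_mul₀ (by linarith)]
    nlinarith
  have h4 : 1 / (1 - Real.exp (-x)) ≤ 1 / (x / 2) :=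
    one_div_le_one_div_of_le (by linarith) (by linarith)
  calc _ ≤ _ := h4
    _ = _ := by field_simp

lemma kOU_pow (θ : ℝ) {D : ℝ} (hD : 0 ≤ D) (i j : ℕ) :
    kOU θ (i * D) (j * D) = (Real.exp (-(θ * D)) ^ ((i - j) + (j - i)) - Real.exp (-(θ * D)) ^ (i + j)) / (2 * θ) := by
  unfold kOU
  rw [← Real.exp_nat_mul, ← Real.exp_nat_mul]
  congr 3
  · have : |(j:ℝ) * D - i * D| = (((i - j) + (j - i) : ℕ) : ℝ) * D := by
      rw [← sub_mul, abs_mul, abs_of_nonneg hD]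
      congr 1
      rcases le_total i j with h | h
      · rw [Nat.sub_eq_zero_of_le h, zero_add, Nat.cast_sub h, abs_of_nonneg]
        have : (i:ℝ) ≤ j := by exact_mod_cast h
        linarith
      · rw [Nat.sub_eq_zero_of_le h, add_zero, Nat.cast_sub h, abs_of_nonpos, neg_sub]
        have : (j:ℝ) ≤ i := by exact_mod_cast h
        linarith
    rw [this]; ring
  · push_cast; ring

lemma kOU_KB {θ D : ℝ} (hθ : 0 < θ) (hD : 0 < D) (h1 : θ * D ≤ 1) (n : ℕ) :
    KB (fun i j => kOU θ (i * D) (j * D)) n (1 / (2 * θ)) (2 / (θ ^ 2 * D)) := by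
  have hx : 0 < θ * D := by positivity
  have a0 : 0 < Real.exp (-(θ * D)) := Real.exp_pos _
  have a1 : Real.exp (-(θ * D)) < 1 := by rw [Real.exp_lt_one_iff]; linarith
  have hle : ∀ i j : ℕ, kOU θ (i * D) (j * D) ≤ Real.exp (-(θ * D)) ^ ((i - j) + (j - i)) / (2 * θ) := by
    intro i j
    rw [kOU_pow θ hD.le]
    gcongr
    linarith [pow_pos a0 (i + j)]
  refine ⟨fun i j => ?_, fun i j => ?_, fun i j => kOU_symm _ _ _, fun i => ?_⟩
  · rw [kOU_pow θ hD.le]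
    refine div_nonneg (sub_nonneg.2 (pow_le_pow_of_le_one a0.le a1.le (by omega))) (by positivity)
  · refine (hle i j).trans ?_
    gcongr
    exact pow_le_one₀ a0.le a1.le
  · calc _ ≤ ∑ j ∈ range n, Real.exp (-(θ * D)) ^ ((i - j) + (j - i)) / (2 * θ) :=
          Finset.sum_le_sum fun j _ => hle i j
      _ = (∑ j ∈ range n, Real.exp (-(θ * D)) ^ ((i - j) + (j - i))) / (2 * θ) := by rw [Finset.sum_div]
      _ ≤ (2 * (2 / (θ * D))) / (2 * θ) := by
          gcongr
          exact (geo_row a0.le a1 n i).trans (mul_le_mul_of_nonneg_left (one_sub_exp hx h1) (by norm_num))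
      _ = _ := by field_simp

lemma diag_bias {θ D : ℝ} (hθ : 0 < θ) (hD : 0 < D) (h1 : θ * D ≤ 1) {n : ℕ} (hn : 0 < n) :
    |2 * θ / n * (∑ k ∈ range n, kOU θ (k * D) (k * D)) - 1| ≤ 2 / (θ * (n * D)) := by
  have hx : 0 < θ * D := by positivity
  have hn' : (0:ℝ) < n := by exact_mod_cast hn
  have a0 : 0 < Real.exp (-(θ * D)) := Real.exp_pos _
  have a1 : Real.exp (-(θ * D)) < 1 := by rw [Real.exp_lt_one_iff]; linarith
  have e : 2 * θ / n * (∑ k ∈ range n, kOU θ (k * D) (k * D)) - 1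
      = - ((1 / n) * ∑ k ∈ range n, Real.exp (-(θ * D)) ^ (k + k)) := by
    simp only [kOU_pow θ hD.le, Nat.sub_self, add_zero, pow_zero]
    rw [← Finset.sum_div, Finset.sum_sub_distrib]
    simp
    field_simp
    ring
  rw [e, abs_neg, abs_of_nonneg (by positivity)]
  calc _ ≤ (1 / (n:ℝ)) * (2 / (θ * D)) := by
        gcongr
        refine (geo_inj a0.le a1 _ _ ?_).trans (one_sub_exp hx h1)
        intro x _ y _ h; omega
    _ = _ := by field_simp

lemma u_sum {b : ℝ} (hb : b ≠ 1) (n : ℕ) :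
    ∑ i ∈ range n, ∑ j ∈ range n, b ^ ((i - j) + (j - i))
      = n * (1 + b) / (1 - b) - 2 * b * (1 - b ^ n) / (1 - b) ^ 2 := by
  have hb' : 1 - b ≠ 0 := sub_ne_zero.2 (Ne.symm hb)
  induction n with
  | zero => simp
  | succ n ih =>
    have hr : ∑ k ∈ range n, b ^ (n - k) = b * (1 - b ^ n) / (1 - b) := by
      rw [← Finset.sum_range_reflect]
      have : ∑ j ∈ range n, b ^ (n - (n - 1 - j)) = ∑ j ∈ range n, b * b ^ j := by
        refine Finset.sum_congr rfl fun j hj => ?_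
        rw [Finset.mem_range] at hj
        rw [← pow_succ']; congr 1; omega
      rw [this, ← Finset.mul_sum, geom_sum_eq hb]
      have : b - 1 ≠ 0 := sub_ne_zero.2 hb
      field_simp
      ring
    simp only [Finset.sum_range_succ, Finset.sum_add_distrib, ih]
    have h1 : ∑ i ∈ range n, b ^ ((i - n) + (n - i)) = ∑ k ∈ range n, b ^ (n - k) :=
      Finset.sum_congr rfl fun j hj => by
        rw [Finset.mem_range] at hj
        congr 1; omega
    have h2 : ∑ i ∈ range n, b ^ ((n - i) + (i - n)) = ∑ k ∈ range n, b ^ (n - k) :=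
      Finset.sum_congr rfl fun j hj => by
        rw [Finset.mem_range] at hj
        congr 1; omega
    rw [h1, h2, hr]
    push_cast
    simp
    field_simp
    ring

lemma ratio_upper {x : ℝ} (h0 : 0 < x) :
    x * (1 + Real.exp (-(2 * x))) / (1 - Real.exp (-(2 * x))) ≤ 1 + x := by
  have hb : Real.exp (-(2 * x)) < 1 := by rw [Real.exp_lt_one_iff]; linarith
  rw [div_le_iff₀ (by linarith)]
  have : Real.exp (-(2 * x)) * (1 + 2 * x) ≤ 1 := by
    rw [Real.exp_neg, inv_mul_le_iff₀ (Real.exp_pos _), mul_one]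
    linarith [Real.add_one_le_exp (2 * x)]
  nlinarith

lemma ratio_lower {x : ℝ} (h0 : 0 < x) :
    1 - x ≤ x * (1 + Real.exp (-(2 * x))) / (1 - Real.exp (-(2 * x))) := by
  have hb : Real.exp (-(2 * x)) < 1 := by rw [Real.exp_lt_one_iff]; linarith
  rw [le_div_iff₀ (by linarith)]
  have := Real.add_one_le_exp (-(2 * x))
  nlinarith

lemma dbl_bias {θ D : ℝ} (hθ : 0 < θ) (hD : 0 < D) (h1 : θ * D ≤ 1) {n : ℕ} (hn : 0 < n) :
    |4 * θ ^ 3 * D / n * (∑ p ∈ range n ×ˢ range n, kOU θ (p.1 * D) (p.2 * D) ^ 2) - 1|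
      ≤ θ * D + 16 / (θ * (n * D)) := by
  have hn' : (0:ℝ) < n := by exact_mod_cast hn
  have hx : 0 < θ * D := by positivity
  have e : 4 * θ ^ 3 * D / n * (∑ p ∈ range n ×ˢ range n, kOU θ (p.1 * D) (p.2 * D) ^ 2)
      = (θ * D) / n * ∑ i ∈ range n, ∑ j ∈ range n,
        (Real.exp (-(θ * D)) ^ ((i - j) + (j - i)) - Real.exp (-(θ * D)) ^ (i + j)) ^ 2 := by
    simp only [Finset.sum_product, kOU_pow θ hD.le, Finset.mul_sum]
    refine Finset.sum_congr rfl fun i _ => Finset.sum_congr rfl fun j _ => ?_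
    field_simp
    ring
  rw [e]
  have e2 : 16 / (θ * (n * D)) = 16 / (n * (θ * D)) := by congr 1; ring
  rw [e2]
  generalize θ * D = x at hx h1
  have a0 : 0 < Real.exp (-x) := Real.exp_pos _
  have a1 : Real.exp (-x) < 1 := by rw [Real.exp_lt_one_iff]; linarith
  have ha := one_sub_exp hx h1
  have hbe : Real.exp (-x) ^ 2 = Real.exp (-(2 * x)) := by rw [← Real.exp_nat_mul]; congr 1; push_cast; ring
  have up := ratio_upper hx
  have lo := ratio_lower hx
  rw [← hbe] at up lo
  generalize Real.exp (-x) = a at *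
  clear hbe e e2
  have hab : a ^ 2 < 1 := by nlinarith
  set S : ℝ := ∑ i ∈ range n, ∑ j ∈ range n, (a ^ ((i - j) + (j - i)) - a ^ (i + j)) ^ 2 with hS
  set u : ℝ := ∑ i ∈ range n, ∑ j ∈ range n, (a ^ 2) ^ ((i - j) + (j - i)) with hu
  have hpq : ∀ i j : ℕ, a ^ (i + j) ≤ a ^ ((i - j) + (j - i)) := fun i j =>
    pow_le_pow_of_le_one a0.le a1.le (by omega)
  have hSu : S ≤ u := by
    refine Finset.sum_le_sum fun i _ => Finset.sum_le_sum fun j _ => ?_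
    rw [pow_right_comm a 2]
    refine pow_le_pow_left₀ (sub_nonneg.2 (hpq i j)) ?_ 2
    linarith [pow_pos a0 (i + j)]
  have hg : ∑ i ∈ range n, a ^ i ≤ 2 / x :=
    (geo_inj a0.le a1 (range n) (fun i => i) (fun _ _ _ _ h => h)).trans ha
  have hg0 : 0 ≤ ∑ i ∈ range n, a ^ i := by positivity
  have huS : u - 2 * (2 / x) ^ 2 ≤ S := by
    have t : u - 2 * (∑ i ∈ range n, a ^ i) ^ 2 ≤ S := by
      rw [sq, Finset.sum_mul_sum, Finset.mul_sum, hu, ← Finset.sum_sub_distrib]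
      refine Finset.sum_le_sum fun i _ => ?_
      rw [Finset.mul_sum, ← Finset.sum_sub_distrib]
      refine Finset.sum_le_sum fun j _ => ?_
      rw [pow_right_comm a 2, ← pow_add]
      have p1 : a ^ ((i - j) + (j - i)) ≤ 1 := pow_le_one₀ a0.le a1.le
      have p2 := pow_pos a0 (i + j)
      nlinarith
    have : (∑ i ∈ range n, a ^ i) ^ 2 ≤ (2 / x) ^ 2 := pow_le_pow_left₀ hg0 hg 2
    linarith
  have hb1 : 1 / (1 - a ^ 2) ≤ 2 / x := by
    refine le_trans (one_div_le_one_div_of_le (by linarith) ?_) ha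
    nlinarith
  have hue := u_sum (b := a ^ 2) (by linarith) n
  rw [← hu] at hue
  set y : ℝ := x * (1 + a ^ 2) / (1 - a ^ 2) with hy
  have hrem0 : 0 ≤ 2 * a ^ 2 * (1 - (a ^ 2) ^ n) / (1 - a ^ 2) ^ 2 := by
    have : (a ^ 2) ^ n ≤ 1 := pow_le_one₀ (by positivity) hab.le
    have : 0 ≤ 1 - (a ^ 2) ^ n := by linarith
    positivity
  have hrem1 : 2 * a ^ 2 * (1 - (a ^ 2) ^ n) / (1 - a ^ 2) ^ 2 ≤ 2 * (2 / x) ^ 2 := by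
    have t1 : 0 < (a ^ 2) ^ n := by positivity
    have t2 : 2 * a ^ 2 * (1 - (a ^ 2) ^ n) ≤ 2 := by nlinarith [pow_pos a0 2]
    have hpos : 0 < 1 - a ^ 2 := by linarith
    calc _ ≤ 2 / (1 - a ^ 2) ^ 2 := by gcongr
      _ = 2 * (1 / (1 - a ^ 2)) ^ 2 := by field_simp
      _ ≤ _ := by
        gcongr
  have hyu : n * (1 + a ^ 2) / (1 - a ^ 2) = n / x * y := by
    rw [hy]; field_simp
  rw [hyu] at hue
  have hxn : 0 < x / n := by positivity
  have c1 : x / n * (n / x * y) = y := by field_simp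
  have c2 : x / n * (4 * (2 / x) ^ 2) = 16 / (n * x) := by field_simp; norm_num
  have s1 : x / n * S ≤ x / n * (n / x * y) := mul_le_mul_of_nonneg_left (by linarith) hxn.le
  have s2 : x / n * (n / x * y - 4 * (2 / x) ^ 2) ≤ x / n * S :=
    mul_le_mul_of_nonneg_left (by linarith) hxn.le
  rw [mul_sub, c1, c2] at s2
  rw [c1] at s1
  have : 0 < 16 / (n * x) := by positivity
  rw [abs_le]
  constructor <;> linarith

end kern

lemma ou_gproc {θ : ℝ} {X : Fin 2 → ℝ → Ω → ℝ} (hX : IsOUPair θ X) (i : Fin 2) :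
    GProc (ℙ : Measure Ω) (kOU θ) (X i) where
  meas := hX.meas i
  gaussian := hX.gaussian i
  cov := hX.cov i
  symm := kOU_symm θ

lemma dterm {θ D s n : ℝ} (hθ : 0 < θ) (hD : 0 < D) (hs : 1 ≤ s) (hn : 0 < n) (hsn : s ^ 2 = n * D) :
    2 * θ / n * ((n / s + 2 * (1 / (2 * θ)) * n * (2 / (θ ^ 2 * D)) / (n / s)) / 2)
      + 2 / (θ * (n * D)) + 2 * θ * (2 / (θ ^ 2 * D) / n) ≤ (θ + 2 / θ ^ 2 + 6 / θ) * (1 / s) := by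
  have hs0 : 0 < s := by linarith
  have hn' : n = s ^ 2 / D := by rw [hsn]; field_simp
  have e : 2 * θ / n * ((n / s + 2 * (1 / (2 * θ)) * n * (2 / (θ ^ 2 * D)) / (n / s)) / 2)
      + 2 / (θ * (n * D)) + 2 * θ * (2 / (θ ^ 2 * D) / n) = (θ + 2 / θ ^ 2) * (1 / s) + 6 / θ * (1 / s ^ 2) := by
    rw [hn']; field_simp; ring
  rw [e]
  have : 1 / s ^ 2 ≤ 1 / s := one_div_le_one_div_of_le hs0 (by nlinarith)
  have : 6 / θ * (1 / s ^ 2) ≤ 6 / θ * (1 / s) := by gcongr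
  linarith

lemma vterm {θ D s n : ℝ} (hθ : 0 < θ) (hD : 0 < D) (hs : 1 ≤ s) (hn : 0 < n) (hsn : s ^ 2 = n * D) :
    4 * θ ^ 3 * D / n * ((n / (D * s) + 2 * (1 / (2 * θ)) * n * (2 / (θ ^ 2 * D)) ^ 3 / (n / (D * s))) / 2)
      + (θ * D + 16 / (θ * (n * D))) + 4 * θ ^ 3 * D / n * (3 * (2 / (θ ^ 2 * D)) ^ 2)
      ≤ (2 * θ ^ 3 + 16 / θ ^ 4 + 64 / θ) * (1 / s) + θ * D := by
  have hs0 : 0 < s := by linarith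
  have hn' : n = s ^ 2 / D := by rw [hsn]; field_simp
  have e : 4 * θ ^ 3 * D / n * ((n / (D * s) + 2 * (1 / (2 * θ)) * n * (2 / (θ ^ 2 * D)) ^ 3 / (n / (D * s))) / 2)
      + (θ * D + 16 / (θ * (n * D))) + 4 * θ ^ 3 * D / n * (3 * (2 / (θ ^ 2 * D)) ^ 2)
      = (2 * θ ^ 3 + 16 / θ ^ 4) * (1 / s) + 64 / θ * (1 / s ^ 2) + θ * D := by
    rw [hn']; field_simp; ring
  rw [e]
  have : 1 / s ^ 2 ≤ 1 / s := one_div_le_one_div_of_le hs0 (by nlinarith)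
  have : 64 / θ * (1 / s ^ 2) ≤ 64 / θ * (1 / s) := by gcongr
  linarith

lemma mn_meas (n : ℕ) : Measurable (mn n) := by
  unfold mn; fun_prop

lemma dfun_meas (θ : ℝ) (n : ℕ) : Measurable (dfun θ n) := by
  have := mn_meas n
  unfold dfun; fun_prop

lemma ou_ident {θ : ℝ} (hθ : 0 < θ) (X : Fin 2 → ℝ → Ω → ℝ) {n : ℕ} (hn : 0 < n) {D : ℝ} (hD : 0 < D) (ω : Ω) :
    √θ * √(n * D) * ouRhoTilde X n D ω
      = (∑ j ∈ range n, (2 * θ * √θ * D / √(n * D)) * (X 1 (j * D) ω - mn n (fun k => X 1 (k * D) ω)) * X 0 (j * D) ω)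
        / √(dfun θ n (fun k => X 0 (k * D) ω) * dfun θ n (fun k => X 1 (k * D) ω)) := by
  have hn' : (0:ℝ) < n := by exact_mod_cast hn
  have hii : ∀ i, ouYtilde X i i n D ω = n * D / (2 * θ) * dfun θ n (fun k => X i (k * D) ω) := by
    intro i
    simp only [ouYtilde, ouXtilde, dfun, mn]
    field_simp
  have h01 : ouYtilde X 0 1 n D ω = D * ∑ j ∈ range n, (X 1 (j * D) ω - mn n (fun k => X 1 (k * D) ω)) * X 0 (j * D) ω := by
    simp only [ouYtilde, ouXtilde, sub_mul, Finset.sum_sub_distrib, ← Finset.mul_sum, mn]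
    rw [mul_sub]
    congr 1
    · congr 1
      exact Finset.sum_congr rfl fun j _ => mul_comm _ _
    · field_simp
  have hc : 0 < n * D / (2 * θ) := by positivity
  simp only [mul_assoc (2 * θ * √θ * D / √(n * D)), ← Finset.mul_sum]
  unfold ouRhoTilde
  rw [hii, hii, h01]
  generalize dfun θ n (fun k => X 0 (k * D) ω) = p
  generalize dfun θ n (fun k => X 1 (k * D) ω) = q
  generalize ∑ j ∈ range n, (X 1 (j * D) ω - mn n (fun k => X 1 (k * D) ω)) * X 0 (j * D) ω = S
  have e : √(n * D / (2 * θ) * p * (n * D / (2 * θ) * q)) = n * D / (2 * θ) * √(p * q) := by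
    rw [show n * D / (2 * θ) * p * (n * D / (2 * θ) * q) = (n * D / (2 * θ)) ^ 2 * (p * q) by ring,
      Real.sqrt_mul (by positivity), Real.sqrt_sq hc.le]
  rw [e]
  have hT : √(n * D) ^ 2 = n * D := Real.sq_sqrt (by positivity)
  have hs : 0 < √(n * D) := Real.sqrt_pos.2 (by positivity)
  rw [← hT]
  simp only [Real.sqrt_sq hs.le]
  generalize √(n * D) = s at *
  rcases eq_or_ne (√(p * q)) 0 with h0 | h0
  · rw [h0]; simp
  · field_simp

lemma ou_main {θ : ℝ} (hθ : 0 < θ) [IsProbabilityMeasure (ℙ : Measure Ω)]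
    {X : Fin 2 → ℝ → Ω → ℝ} (hX : IsOUPair θ X) :
    ∃ C : ℝ, 0 < C ∧ ∀ (n : ℕ) (D : ℝ), 0 < n → 0 < D → θ * D ≤ 1 → 1 ≤ n * D → ∀ z : ℝ,
      |(ℙ : Measure Ω).real {ω | √θ * √(n * D) * ouRhoTilde X n D ω ≤ z} - (gaussianReal 0 1 (Set.Iic z)).toReal|
        ≤ C * (1 / √(n * D) + D) := by
  refine ⟨6 * (θ + 2 / θ ^ 2 + 6 / θ) + 2 * (2 * θ ^ 3 + 16 / θ ^ 4 + 64 / θ) + 2 * θ, by positivity, ?_⟩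
  intro n D hn hD h1 hT z
  have hn' : (0:ℝ) < n := by exact_mod_cast hn
  have hs : 1 ≤ √(n * D) := by rw [Real.one_le_sqrt]; exact hT
  have hs2 : √(n * D) ^ 2 = n * D := Real.sq_sqrt (by positivity)
  have hs0 : 0 < √(n * D) := by linarith
  set s := √(n * D) with hsdef
  set g : ℝ := 2 * θ * √θ * D / s with hg
  have hg2 : g ^ 2 = 4 * θ ^ 3 * D / n := by
    rw [hg, div_pow, mul_pow, mul_pow, Real.sq_sqrt hθ.le, hs2]; field_simp; ring
  set K : ℕ → ℕ → ℝ := fun i j => kOU θ (i * D) (j * D) with hK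
  have KBh := kOU_KB hθ hD h1 n
  have m0 := (ou_gproc hX 0).mom hD.le
  have m1 := (ou_gproc hX 1).mom hD.le
  have g0 := (ou_gproc hX 0).isG hD.le n
  have g1 := (ou_gproc hX 1).isG hD.le n
  have d0 := m0.dbound KBh hn hθ (l := n / s) (by positivity)
  have d1 := m1.dbound KBh hn hθ (l := n / s) (by positivity)
  have v := m1.vbound KBh hn (by positivity) (g := g) (l := n / (D * s)) (by positivity)
  have bd := diag_bias hθ hD h1 hn
  have bv := dbl_bias hθ hD h1 hn
  have dt := dterm hθ hD hs hn' hs2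
  have vt := vterm hθ hD hs hn' hs2
  have hmW : Measurable (fun ω (k : ℕ) => X 0 (k * D) ω) := measurable_pi_lambda _ fun k => hX.meas 0 _
  have hmZ : Measurable (fun ω (k : ℕ) => X 1 (k * D) ω) := measurable_pi_lambda _ fun k => hX.meas 1 _
  have hI : IndepFun (fun ω (k : ℕ) => X 0 (k * D) ω) (fun ω (k : ℕ) => X 1 (k * D) ω) ℙ := by
    have hm : Measurable (fun (f : ℝ → ℝ) (k : ℕ) => f (k * D)) :=
      measurable_pi_lambda _ fun k => measurable_pi_apply _
    exact hX.indep.comp hm hm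
  have ha : Measurable (fun (ζ : ℕ → ℝ) (j : ℕ) => g * (ζ j - mn n ζ)) := by
    have := mn_meas n
    fun_prop
  have hsymm : ∀ ω : Ω, ∑ j ∈ range n, g * (X 1 (j * D) ω - mn n (fun k => X 1 (k * D) ω)) * X 0 (j * D) ω
      = ∑ j ∈ range n, g * (X 0 (j * D) ω - mn n (fun k => X 0 (k * D) ω)) * X 1 (j * D) ω := by
    intro ω
    simp only [mul_assoc, sub_mul, ← Finset.mul_sum, Finset.sum_sub_distrib, mn]
    congr 2
    · exact Finset.sum_congr rfl fun j _ => mul_comm _ _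
    · ring
  have key := core_bound hmW hmZ hI g0 g1 ha hsymm (dfun_meas θ n) z d0.1 d1.1 v.1
  have hset : {ω | √θ * s * ouRhoTilde X n D ω ≤ z} = {ω | (∑ j ∈ range n, g * (X 1 (j * D) ω - mn n (fun k => X 1 (k * D) ω)) * X 0 (j * D) ω)
        / √(dfun θ n (fun k => X 0 (k * D) ω) * dfun θ n (fun k => X 1 (k * D) ω)) ≤ z} := by
    ext ω
    simp only [Set.mem_ofPred_eq]
    rw [hsdef, ou_ident hθ X hn hD ω]
  rw [hset]
  refine key.trans ?_
  have d0' := d0.2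
  have d1' := d1.2
  have v' := v.2
  rw [hg2] at v'
  have hsi : 0 < 1 / s := by positivity
  have k1 : 0 ≤ (6 * (θ + 2 / θ ^ 2 + 6 / θ) + 2 * (2 * θ ^ 3 + 16 / θ ^ 4 + 64 / θ)) * D := by positivity
  have k2 : 0 ≤ 2 * θ * (1 / s) := by positivity
  have q0 : ∫ ω, |dfun θ n (fun k => X 0 (k * D) ω) - 1| ∂(ℙ : Measure Ω) ≤ (θ + 2 / θ ^ 2 + 6 / θ) * (1 / s) := by
    refine d0'.trans (le_trans ?_ dt)
    gcongr
  have q1 : ∫ ω, |dfun θ n (fun k => X 1 (k * D) ω) - 1| ∂(ℙ : Measure Ω) ≤ (θ + 2 / θ ^ 2 + 6 / θ) * (1 / s) := by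
    refine d1'.trans (le_trans ?_ dt)
    gcongr
  have q2 := v'.trans (le_trans (add_le_add (add_le_add le_rfl bv) le_rfl) vt)
  nlinarith

lemma ou_meas {θ : ℝ} {X : Fin 2 → ℝ → Ω → ℝ} (hX : IsOUPair θ X) (n : ℕ) (D : ℝ) :
    Measurable (ouRhoTilde X n D) := by
  have := hX.meas
  unfold ouRhoTilde ouYtilde ouXtilde
  fun_prop

lemma ou_kol {θ : ℝ} (hθ : 0 < θ) [IsProbabilityMeasure (ℙ : Measure Ω)]
    {X : Fin 2 → ℝ → Ω → ℝ} (hX : IsOUPair θ X) :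
    ∃ C : ℝ, 0 < C ∧ ∀ (n : ℕ) (D : ℝ), 0 < n → 0 < D → θ * D ≤ 1 → 1 ≤ n * D →
      dKol (Measure.map (fun ω => √θ * √(n * D) * ouRhoTilde X n D ω) (ℙ : Measure Ω)) (gaussianReal 0 1)
        ≤ C * (1 / √(n * D) + D) ∧
      dKol (Measure.map (fun ω => √(n * D) * ouRhoTilde X n D ω) (ℙ : Measure Ω))
        (gaussianReal 0 (Real.toNNReal (1 / θ))) ≤ C * (1 / √(n * D) + D) := by
  obtain ⟨C, hC, h⟩ := ou_main hθ hX
  refine ⟨C, hC, fun n D hn hD h1 hT => ?_⟩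
  have hm := ou_meas hX n D
  have hsq : 0 < √θ := Real.sqrt_pos.2 hθ
  constructor
  · refine ciSup_le fun z => ?_
    rw [Measure.map_apply (by fun_prop) measurableSet_Iic]
    exact h n D hn hD h1 hT z
  · refine ciSup_le fun z => ?_
    rw [Measure.map_apply (by fun_prop) measurableSet_Iic]
    have hz := h n D hn hD h1 hT (√θ * z)
    have e1 : {ω | √θ * √(n * D) * ouRhoTilde X n D ω ≤ √θ * z}
        = (fun ω => √(n * D) * ouRhoTilde X n D ω) ⁻¹' Set.Iic z := by
      ext ω
      simp only [Set.mem_ofPred_eq, Set.mem_preimage, Set.mem_Iic]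
      rw [mul_assoc, mul_le_mul_iff_right₀ hsq]
    have e2 : gaussianReal 0 1 (Set.Iic (√θ * z)) = gaussianReal 0 (Real.toNNReal (1 / θ)) (Set.Iic z) := by
      have t := gaussianReal_map_const_mul (μ := 0) (v := Real.toNNReal (1 / θ)) (√θ)
      have t2 : NNReal.mk (√θ ^ 2) (sq_nonneg _) * Real.toNNReal (1 / θ) = 1 := by
        apply NNReal.eq
        simp only [NNReal.coe_mul, NNReal.coe_mk, NNReal.coe_one]
        rw [Real.sq_sqrt hθ.le, Real.coe_toNNReal _ (by positivity)]
        field_simp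
      rw [mul_zero, t2] at t
      rw [← t, Measure.map_apply (by fun_prop) measurableSet_Iic]
      congr 1
      ext x
      simp only [Set.mem_preimage, Set.mem_Iic]
      rw [mul_le_mul_iff_right₀ hsq]
    rw [e1, e2] at hz
    exact hz

lemma dKol_nonneg (μ ν : Measure ℝ) : 0 ≤ dKol μ ν := Real.iSup_nonneg fun _ => abs_nonneg _

/-- if `Δₙ → 0` and `nΔₙ → ∞`, there are `c(θ) > 0` and `n₀` such that
for `n ≥ n₀`,
`d_Kol(√θ·√Tₙ·ρ̃(n), N(0,1)) ≤ c(θ)·ln(nΔₙ)·max((nΔₙ)^{−1/2}, (nΔₙ²)^{1/3})`;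
in particular if additionally `nΔₙ² → 0` then `√Tₙ·ρ̃(n) ⇒ N(0, 1/θ)`. -/
theorem stmt_18 (θ : ℝ) (hθ : 0 < θ) [IsProbabilityMeasure (ℙ : Measure Ω)]
    (X : Fin 2 → ℝ → Ω → ℝ) (hX : IsOUPair θ X)
    (Δ : ℕ → ℝ) (hΔpos : ∀ n, 0 < Δ n) (hΔ0 : Tendsto Δ atTop (𝓝 0))
    (hT : Tendsto (fun n : ℕ => (n : ℝ) * Δ n) atTop atTop) :
    (∃ c : ℝ, 0 < c ∧ ∃ n₀ : ℕ, ∀ n : ℕ, n₀ ≤ n →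
      dKol (Measure.map
            (fun ω => Real.sqrt θ * Real.sqrt ((n : ℝ) * Δ n) * ouRhoTilde X n (Δ n) ω) ℙ)
          (gaussianReal 0 1)
        ≤ c * Real.log ((n : ℝ) * Δ n)
            * max (1 / Real.sqrt ((n : ℝ) * Δ n)) (((n : ℝ) * (Δ n) ^ 2) ^ ((1 : ℝ) / 3))) ∧
    (Tendsto (fun n : ℕ => (n : ℝ) * (Δ n) ^ 2) atTop (𝓝 0) →
      Tendsto (fun n : ℕ =>
          dKol (Measure.map
              (fun ω => Real.sqrt ((n : ℝ) * Δ n) * ouRhoTilde X n (Δ n) ω) ℙ)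
            (gaussianReal 0 (Real.toNNReal (1 / θ)))) atTop (𝓝 0)) := by
  obtain ⟨C, hC, h⟩ := ou_kol hθ hX
  have ev : ∀ᶠ n : ℕ in atTop, 0 < n ∧ θ * Δ n ≤ 1 ∧ Δ n ≤ 1 ∧ Real.exp 1 ≤ n * Δ n := by
    have t1 : Tendsto (fun n => θ * Δ n) atTop (𝓝 0) := by simpa using hΔ0.const_mul θ
    filter_upwards [eventually_gt_atTop 0, t1.eventually (eventually_le_nhds zero_lt_one),
      hΔ0.eventually (eventually_le_nhds zero_lt_one), hT.eventually_ge_atTop (Real.exp 1)] with n a b c d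
    exact ⟨a, b, c, d⟩
  have he1 : (1:ℝ) ≤ Real.exp 1 := Real.one_le_exp zero_le_one
  constructor
  · obtain ⟨n₀, hn₀⟩ := eventually_atTop.1 ev
    refine ⟨2 * C, by positivity, n₀, fun n hn => ?_⟩
    obtain ⟨hn0, h1, h2, h3⟩ := hn₀ n hn
    have hD := hΔpos n
    have hn1 : (1:ℝ) ≤ n := by exact_mod_cast hn0
    refine (h n (Δ n) hn0 hD h1 (he1.trans h3)).1.trans ?_
    have hlog : 1 ≤ Real.log (n * Δ n) := (Real.le_log_iff_exp_le (by positivity)).2 h3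
    set m := max (1 / √((n:ℝ) * Δ n)) (((n:ℝ) * (Δ n) ^ 2) ^ ((1 : ℝ) / 3)) with hm
    have m1 : 1 / √((n:ℝ) * Δ n) ≤ m := le_max_left _ _
    have m2 : Δ n ≤ m := by
      refine le_trans ?_ (le_max_right _ _)
      calc Δ n = ((Δ n) ^ 3) ^ ((1:ℝ) / 3) := by
            rw [← Real.rpow_natCast, ← Real.rpow_mul hD.le]; norm_num
        _ ≤ _ := by
            refine Real.rpow_le_rpow (by positivity) ?_ (by norm_num)
            nlinarith [sq_nonneg (Δ n), mul_nonneg (sub_nonneg.2 hn1) (sq_nonneg (Δ n)),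
              mul_nonneg (sub_nonneg.2 h2) (sq_nonneg (Δ n))]
    have m0 : 0 ≤ m := hD.le.trans m2
    calc C * (1 / √((n:ℝ) * Δ n) + Δ n) ≤ C * (m + m) := by gcongr
      _ = 2 * C * 1 * m := by ring
      _ ≤ _ := by gcongr
  · intro _
    have lim : Tendsto (fun n : ℕ => C * (1 / √((n:ℝ) * Δ n) + Δ n)) atTop (𝓝 0) := by
      have t1 : Tendsto (fun n : ℕ => 1 / √((n:ℝ) * Δ n)) atTop (𝓝 0) := by
        simp only [one_div]
        exact tendsto_inv_atTop_zero.comp (Real.tendsto_sqrt_atTop.comp hT)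
      simpa using (t1.add hΔ0).const_mul C
    refine squeeze_zero' (Eventually.of_forall fun n => dKol_nonneg _ _) ?_ lim
    filter_upwards [ev] with n hn
    exact (h n (Δ n) hn.1 (hΔpos n) hn.2.1 (he1.trans hn.2.2.2)).2

end
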